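/- arXiv:1906.05515 — 11 statements merged into one kernel-verified Lean document; each statement's English description precedes it below -/
import Mathlib

section
/- Let S be a regular monoid such that for every finitely generated right congruence ρ on S and all elements a, b, x, y ∈ S, the right ideals (aS)ρ ∩ (bS)ρ and (aS, x) ∩ (bS, y) of S are finitely generated. Then S is right coherent. -/
def IsRightCongruence {M : Type*} [Monoid M] (r : M → M → Prop) : Prop :=
  Equivalence r ∧ ∀ a b c : M, r a b → r (a * c) (b * c)

def RCongGenBy {M : Type*} [Monoid M] (H : Set (M × M)) (r : M → M → Prop) : Prop :=
  IsRightCongruence r ∧ (∀ p ∈ H, r p.1 p.2) ∧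
    ∀ r' : M → M → Prop, IsRightCongruence r' → (∀ p ∈ H, r' p.1 p.2) →
      ∀ x y : M, r x y → r' x y

def FGRightCongruence {M : Type*} [Monoid M] (r : M → M → Prop) : Prop :=
  ∃ H : Set (M × M), H.Finite ∧ RCongGenBy H r

def RightCoherent (M : Type*) [Monoid M] : Prop :=
  ∀ r : M → M → Prop, FGRightCongruence r → ∀ a b : M,
    (∃ C : Finset M,
      {x : M | (∃ s : M, r x (a * s)) ∧ (∃ t : M, r x (b * t))} =
        ⋃ c ∈ C, {x : M | ∃ s : M, r x (c * s)}) ∧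
    FGRightCongruence (fun u v : M => r (a * u) (a * v))

def IsRightIdeal {M : Type*} [Monoid M] (I : Set M) : Prop :=
  ∀ a ∈ I, ∀ s : M, a * s ∈ I

def FGRightIdeal {M : Type*} [Monoid M] (I : Set M) : Prop :=
  ∃ A : Finset M, I = ⋃ a ∈ A, {x : M | ∃ s : M, x = a * s}

def WeaklyRightNoetherian (M : Type*) [Monoid M] : Prop :=
  ∀ I : Set M, IsRightIdeal I → FGRightIdeal I

theorem stmt0 {S : Type*} [Monoid S]
    (hreg : ∀ a : S, ∃ b : S, a = a * b * a)
    (h : ∀ r : S → S → Prop, FGRightCongruence r → ∀ a b x y : S,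
      FGRightIdeal ({s : S | ∃ t : S, r s (a * t)} ∩ {s : S | ∃ t : S, r s (b * t)}) ∧
      FGRightIdeal ({t : S | ∃ u : S, x * t = a * u} ∩ {t : S | ∃ v : S, y * t = b * v})) :
    RightCoherent S := by
  classical
  intro r hr a b
  obtain ⟨H, hH, hrc, hHr, hmin⟩ := id hr
  obtain ⟨heq, hmul⟩ := id hrc
  refine ⟨?_, ?_⟩
  · obtain ⟨C, hC⟩ := (h r hr a b 1 1).1
    refine ⟨C, ?_⟩
    have hC' : ∀ x : S, ((∃ s : S, r x (a * s)) ∧ (∃ t : S, r x (b * t))) ↔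
        ∃ c ∈ C, ∃ s : S, x = c * s := by
      intro x
      have := Set.ext_iff.1 hC x
      simpa using this
    ext x
    simp only [Set.mem_ofPred_eq, Set.mem_iUnion, exists_prop]
    constructor
    · intro hx
      obtain ⟨c, hc, s, rfl⟩ := (hC' x).1 hx
      exact ⟨c, hc, s, heq.refl _⟩
    · rintro ⟨c, hc, s, hs⟩
      obtain ⟨⟨u, hu⟩, ⟨v, hv⟩⟩ := (hC' (c * s)).2 ⟨c, hc, s, rfl⟩
      exact ⟨⟨u, heq.trans hs hu⟩, ⟨v, heq.trans hs hv⟩⟩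
  · obtain ⟨C, hC⟩ := (h r hr a a 1 1).1
    have hC' : ∀ x : S, (∃ s : S, r x (a * s)) ↔ ∃ c ∈ C, ∃ s : S, x = c * s := by
      intro x
      have := Set.ext_iff.1 hC x
      simpa using this
    have hg : ∀ c : S, ∃ g : S, c ∈ C → ∀ z : S, r (a * (g * (c * z))) (c * z) := by
      intro c
      by_cases hc : c ∈ C
      · obtain ⟨t, ht⟩ := (hC' c).2 ⟨c, hc, 1, by simp⟩
        obtain ⟨d, hd⟩ := hreg c
        refine ⟨t * d, fun _ z => ?_⟩
        have h1 := hmul _ _ (d * (c * z)) (heq.symm ht)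
        have h2 : c * (d * (c * z)) = c * z := by
          rw [← mul_assoc, ← mul_assoc, ← hd]
        rw [h2] at h1
        simpa [mul_assoc] using h1
      · exact ⟨1, fun h' => absurd h' hc⟩
    choose g hg using hg
    have hM : ∀ c c' : S, ∃ A : Finset S, ∀ x : S,
        ((∃ u, x = c * u) ∧ (∃ v, x = c' * v)) ↔ ∃ m ∈ A, ∃ s, x = m * s := by
      intro c c'
      obtain ⟨A, hA⟩ := (h r hr c c' 1 1).2
      refine ⟨A, fun x => ?_⟩
      have := Set.ext_iff.1 hA x
      simpa using this
    choose M hM using hM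
    have hW : ∀ c p : S, ∃ A : Finset S, ∀ x : S,
        (∃ u, p * x = c * u) ↔ ∃ m ∈ A, ∃ s, x = m * s := by
      intro c p
      obtain ⟨A, hA⟩ := (h r hr c c p p).2
      refine ⟨A, fun x => ?_⟩
      have := Set.ext_iff.1 hA x
      simpa using this
    choose W hW using hW
    let X : Set S := {a} ∪ (⋃ c ∈ C, ⋃ c' ∈ C, (M c c' : Set S)) ∪
      (⋃ p ∈ H, ⋃ c ∈ C, (Set.image (fun w => p.1 * w) (W c p.1 : Set S) ∪
        Set.image (fun w => p.2 * w) (W c p.1 : Set S)))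
    have hX : X.Finite := by
      refine Set.Finite.union (Set.Finite.union (Set.finite_singleton a) ?_) ?_
      · exact C.finite_toSet.biUnion fun c _ => C.finite_toSet.biUnion fun c' _ =>
          (M c c').finite_toSet
      · exact hH.biUnion fun p _ => C.finite_toSet.biUnion fun c _ =>
          ((W c p.1).finite_toSet.image _).union ((W c p.1).finite_toSet.image _)
    let Y : Set S := {1} ∪ Set.image2 (fun c x => g c * x) (C : Set S) X
    have hY : Y.Finite := (Set.finite_singleton 1).union (C.finite_toSet.image2 _ hX)
    refine ⟨{q | q ∈ Y ×ˢ Y ∧ r (a * q.1) (a * q.2)},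
      (hY.prod hY).subset fun q hq => hq.1, ?_, fun q hq => hq.2, ?_⟩
    · refine ⟨⟨fun x => heq.refl _, fun h' => heq.symm h', fun h1 h2 => heq.trans h1 h2⟩, ?_⟩
      intro x y z hxy
      simpa [mul_assoc] using hmul _ _ z hxy
    intro σ hσ hG
    obtain ⟨σeq, σmul⟩ := hσ
    have haX : a ∈ X := Or.inl (Or.inl rfl)
    have key : ∀ c ∈ C, ∀ c' ∈ C, ∀ x ∈ X, ∀ y ∈ X, (∃ u, x = c * u) → (∃ v, y = c' * v) →
        r x y → ∀ s, σ (g c * (x * s)) (g c' * (y * s)) := by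
      rintro c hc c' hc' x hx y hy ⟨u, hu⟩ ⟨v, hv⟩ hxy s
      have h1 : σ (g c * x) (g c' * y) := by
        refine hG (g c * x, g c' * y) ⟨⟨Or.inr ⟨c, hc, x, hx, rfl⟩,
          Or.inr ⟨c', hc', y, hy, rfl⟩⟩, ?_⟩
        have e1 := hg c hc u
        have e2 := hg c' hc' v
        rw [← hu] at e1
        rw [← hv] at e2
        exact heq.trans e1 (heq.trans hxy (heq.symm e2))
      simpa [mul_assoc] using σmul _ _ s h1
    have overlap : ∀ c ∈ C, ∀ c' ∈ C, ∀ x, (∃ u, x = c * u) → (∃ v, x = c' * v) →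
        σ (g c * x) (g c' * x) := by
      intro c hc c' hc' x hu hv
      obtain ⟨m, hm, s, rfl⟩ := (hM c c' x).1 ⟨hu, hv⟩
      obtain ⟨hmu, hmv⟩ := (hM c c' m).2 ⟨m, hm, 1, by simp⟩
      have hmX : m ∈ X := by
        refine Or.inl (Or.inr ?_)
        simp only [Set.mem_iUnion]
        exact ⟨c, hc, c', hc', hm⟩
      exact key c hc c' hc' m hmX m hmX hmu hmv (heq.refl _) s
    have main := hmin (fun x y => r x y ∧ ∀ s, ∀ c ∈ C, ∀ c' ∈ C, (∃ u, x * s = c * u) →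
        (∃ v, y * s = c' * v) → σ (g c * (x * s)) (g c' * (y * s))) ?_ ?_
    · obtain ⟨c, hc, u, hu⟩ := (hC' a).1 ⟨1, by simpa using heq.refl a⟩
      have hunit : ∀ s, σ (g c * (a * s)) s := by
        intro s
        have h1 : σ (g c * a) 1 := by
          refine hG (g c * a, 1) ⟨⟨Or.inr ⟨c, hc, a, haX, rfl⟩, Or.inl rfl⟩, ?_⟩
          have e1 := hg c hc u
          rw [← hu] at e1
          simpa using e1
        simpa [mul_assoc] using σmul _ _ s h1
      have hau : ∀ s, ∃ u', a * s = c * u' := fun s => ⟨u * s, by rw [← mul_assoc, ← hu]⟩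
      intro x y hxy
      have h2 := (main _ _ hxy).2 1 c hc c hc (by simpa using hau x) (by simpa using hau y)
      simp only [mul_one] at h2
      exact σeq.trans (σeq.symm (hunit x)) (σeq.trans h2 (hunit y))
    · refine ⟨⟨?_, ?_, ?_⟩, ?_⟩
      · exact fun x => ⟨heq.refl _, fun s c hc c' hc' hu hv => overlap c hc c' hc' _ hu hv⟩
      · exact fun ⟨h1, h2⟩ => ⟨heq.symm h1, fun s c hc c' hc' hu hv =>
          σeq.symm (h2 s c' hc' c hc hv hu)⟩
      · rintro x y z ⟨h1, h2⟩ ⟨h3, h4⟩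
        refine ⟨heq.trans h1 h3, fun s c hc c' hc' hu hv => ?_⟩
        obtain ⟨t, ht⟩ := (hC' (x * s)).2 ⟨c, hc, hu⟩
        obtain ⟨d, hd, hw⟩ := (hC' (y * s)).1 ⟨t, heq.trans (heq.symm (hmul _ _ s h1)) ht⟩
        exact σeq.trans (h2 s c hc d hd hu hw) (h4 s d hd c' hc' hw hv)
      · rintro x y z ⟨h1, h2⟩
        refine ⟨hmul _ _ _ h1, fun s c hc c' hc' hu hv => ?_⟩
        have h3 := h2 (z * s) c hc c' hc' (by simpa [mul_assoc] using hu)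
          (by simpa [mul_assoc] using hv)
        simpa [mul_assoc] using h3
    · intro p hp
      refine ⟨hHr p hp, fun s c hc c' hc' hu hv => ?_⟩
      obtain ⟨w, hw, s', rfl⟩ := (hW c p.1 s).1 hu
      have hpw := (hW c p.1 w).2 ⟨w, hw, 1, by simp⟩
      have hr1 := hmul _ _ w (hHr p hp)
      obtain ⟨t, ht⟩ := (hC' (p.1 * w)).2 ⟨c, hc, hpw⟩
      obtain ⟨d, hd, v, hdv⟩ := (hC' (p.2 * w)).1 ⟨t, heq.trans (heq.symm hr1) ht⟩
      have hX1 : p.1 * w ∈ X := by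
        refine Or.inr ?_
        simp only [Set.mem_iUnion]
        exact ⟨p, hp, c, hc, Or.inl ⟨w, hw, rfl⟩⟩
      have hX2 : p.2 * w ∈ X := by
        refine Or.inr ?_
        simp only [Set.mem_iUnion]
        exact ⟨p, hp, c, hc, Or.inr ⟨w, hw, rfl⟩⟩
      have k1 := key c hc d hd _ hX1 _ hX2 hpw ⟨v, hdv⟩ hr1 s'
      have k2 := overlap d hd c' hc' (p.2 * (w * s'))
        ⟨v * s', by rw [← mul_assoc, hdv, mul_assoc]⟩ hv
      rw [mul_assoc, mul_assoc] at k1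
      exact σeq.trans k1 k2
end

section
/- Every weakly right noetherian regular monoid is right coherent. -/
theorem fg_ideal_aux {S : Type*} [Monoid S] (hwn : WeaklyRightNoetherian S)
    (P : S → Prop) (hP : ∀ x s, P x → P (x * s)) :
    ∃ B : Finset S, ∀ x, P x ↔ ∃ h ∈ B, ∃ s, x = h * s := by
  obtain ⟨B, hB⟩ := hwn {x | P x} (fun x hx s => hP x s hx)
  refine ⟨B, fun x => ?_⟩
  have : x ∈ {x | P x} ↔ x ∈ ⋃ a ∈ B, {x : S | ∃ s : S, x = a * s} := by rw [← hB]
  simpa using this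

theorem stmt1 {S : Type*} [Monoid S]
    (hreg : ∀ a : S, ∃ b : S, a = a * b * a)
    (hwn : WeaklyRightNoetherian S) :
    RightCoherent S := by
  rintro r ⟨H, hHf, ⟨hre, hrm⟩, hHr, hmin⟩ a b
  constructor
  · obtain ⟨C, hC⟩ := fg_ideal_aux hwn
      (fun x => (∃ s : S, r x (a * s)) ∧ (∃ t : S, r x (b * t)))
      (by
        rintro x s ⟨⟨u, hu⟩, v, hv⟩
        exact ⟨⟨u * s, by simpa [mul_assoc] using hrm _ _ s hu⟩,
          v * s, by simpa [mul_assoc] using hrm _ _ s hv⟩)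
    refine ⟨C, ?_⟩
    ext x
    simp only [Set.mem_setOf_eq, Set.mem_iUnion, exists_prop]
    constructor
    · intro hx
      obtain ⟨h, hh, s, rfl⟩ := (hC x).1 hx
      exact ⟨h, hh, s, hre.refl _⟩
    · rintro ⟨h, hh, s, hs⟩
      obtain ⟨⟨u, hu⟩, v, hv⟩ := (hC (h * s)).2 ⟨h, hh, s, rfl⟩
      exact ⟨⟨u, hre.trans hs hu⟩, v, hre.trans hs hv⟩
  · have hJm : ∀ x s, (∃ t, r x (a * t)) → ∃ t, r (x * s) (a * t) := by
      rintro x s ⟨u, hu⟩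
      exact ⟨u * s, by simpa [mul_assoc] using hrm _ _ s hu⟩
    obtain ⟨A, hA⟩ := fg_ideal_aux hwn (fun x => ∃ t, r x (a * t)) hJm
    have hσ : ∀ g : S, ∃ σ : S, g ∈ A → ∀ x, (∃ s, x = g * s) → r x (a * (σ * x)) := by
      intro g
      by_cases hg : g ∈ A
      · obtain ⟨g', hg'⟩ := hreg g
        obtain ⟨t, ht⟩ := (hA (g * g')).2 ⟨g, hg, g', rfl⟩
        refine ⟨t, fun _ x => ?_⟩
        rintro ⟨s, rfl⟩
        have := hrm _ _ (g * s) ht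
        rw [← mul_assoc (g * g'), ← hg'] at this
        simpa [mul_assoc] using this
      · exact ⟨1, fun h => absurd h hg⟩
    choose σ hσ using hσ
    have hB : ∀ g : S, ∃ B : Finset S, ∀ u, (∃ s, a * u = g * s) ↔ ∃ h ∈ B, ∃ s, u = h * s := by
      intro g
      apply fg_ideal_aux hwn
      rintro x s ⟨t, ht⟩
      exact ⟨t * s, by rw [← mul_assoc, ht, mul_assoc]⟩
    choose B hB using hB
    have hC : ∀ (p : S × S) (g g' : S), ∃ B : Finset S, ∀ u,
        ((∃ s, p.1 * u = g * s) ∧ (∃ s, p.2 * u = g' * s)) ↔ ∃ h ∈ B, ∃ s, u = h * s := by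
      intro p g g'
      apply fg_ideal_aux hwn
      rintro x s ⟨⟨t, ht⟩, t', ht'⟩
      exact ⟨⟨t * s, by rw [← mul_assoc, ht, mul_assoc]⟩,
        t' * s, by rw [← mul_assoc, ht', mul_assoc]⟩
    choose C hC using hC
    let H1 : Set (S × S) := insert (1, 1) H
    have hH1f : H1.Finite := hHf.insert _
    have hH1r : ∀ p ∈ H1, r p.1 p.2 := by
      rintro p (rfl | hp)
      · exact hre.refl _
      · exact hHr p hp
    let K : Set (S × S) := (⋃ g ∈ A, (fun h => (h, σ g * (a * h))) '' (B g : Set S)) ∪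
      ⋃ p ∈ H1, ⋃ g ∈ A, ⋃ g' ∈ A,
        (fun h => (σ g * (p.1 * h), σ g' * (p.2 * h))) '' (C p g g' : Set S)
    refine ⟨K, ?_, ⟨⟨⟨fun _ => hre.refl _, fun h => hre.symm h, fun h h' => hre.trans h h'⟩, ?_⟩,
      ?_, ?_⟩⟩
    · refine Set.Finite.union ?_ ?_
      · exact A.finite_toSet.biUnion fun g _ => (B g).finite_toSet.image _
      · exact hH1f.biUnion fun p _ => A.finite_toSet.biUnion fun g _ =>
          A.finite_toSet.biUnion fun g' _ => (C p g g').finite_toSet.image _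
    · intro u v c h
      simpa [mul_assoc] using hrm _ _ c h
    · rintro q (hq | hq)
      · simp only [Set.mem_iUnion, Set.mem_image, exists_prop] at hq
        obtain ⟨g, hg, h, hh, rfl⟩ := hq
        exact hσ g hg _ ((hB g h).2 ⟨h, hh, 1, by simp⟩)
      · simp only [Set.mem_iUnion, Set.mem_image, exists_prop] at hq
        obtain ⟨p, hp, g, hg, g', hg', h, hh, rfl⟩ := hq
        obtain ⟨h1, h2⟩ := (hC p g g' h).2 ⟨h, hh, 1, by simp⟩
        exact hre.trans (hre.symm (hσ g hg _ h1))
          (hre.trans (hrm _ _ h (hH1r p hp)) (hσ g' hg' _ h2))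
    · rintro r' ⟨hre', hrm'⟩ hK u v huv
      have k1 : ∀ g ∈ A, ∀ u, (∃ s, a * u = g * s) → r' u (σ g * (a * u)) := by
        intro g hg u hu
        obtain ⟨h, hh, s, rfl⟩ := (hB g u).1 hu
        have := hK (h, σ g * (a * h)) (Or.inl (by
          simp only [Set.mem_iUnion, Set.mem_image, exists_prop]
          exact ⟨g, hg, h, hh, rfl⟩))
        simpa [mul_assoc] using hrm' _ _ s this
      have k2 : ∀ p ∈ H1, ∀ g ∈ A, ∀ g' ∈ A, ∀ u, (∃ s, p.1 * u = g * s) →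
          (∃ s, p.2 * u = g' * s) → r' (σ g * (p.1 * u)) (σ g' * (p.2 * u)) := by
        intro p hp g hg g' hg' u hu hu'
        obtain ⟨h, hh, s, rfl⟩ := (hC p g g' u).1 ⟨hu, hu'⟩
        have := hK (σ g * (p.1 * h), σ g' * (p.2 * h)) (Or.inr (by
          simp only [Set.mem_iUnion, Set.mem_image, exists_prop]
          exact ⟨p, hp, g, hg, g', hg', h, hh, rfl⟩))
        simpa [mul_assoc] using hrm' _ _ s this
      let R : S → S → Prop := fun x y => ∀ c,
        ((∃ t, r (x * c) (a * t)) ↔ (∃ t, r (y * c) (a * t))) ∧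
        ∀ g ∈ A, ∀ g' ∈ A, (∃ s, x * c = g * s) → (∃ s, y * c = g' * s) →
          r' (σ g * (x * c)) (σ g' * (y * c))
      have hR : IsRightCongruence R := by
        refine ⟨⟨?_, ?_, ?_⟩, ?_⟩
        · intro x c
          refine ⟨Iff.rfl, fun g hg g' hg' h h' => ?_⟩
          have := k2 (1, 1) (Or.inl rfl) g hg g' hg' (x * c) (by simpa using h) (by simpa using h')
          simpa using this
        · intro x y h c
          exact ⟨(h c).1.symm, fun g hg g' hg' h1 h2 => hre'.symm ((h c).2 g' hg' g hg h2 h1)⟩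
        · intro x y z h h' c
          refine ⟨(h c).1.trans (h' c).1, fun g hg g' hg' h1 h2 => ?_⟩
          obtain ⟨s, hs⟩ := h1
          obtain ⟨k, hk, t, ht⟩ := (hA _).1 ((h c).1.1 ((hA _).2 ⟨g, hg, s, hs⟩))
          exact hre'.trans ((h c).2 g hg k hk ⟨s, hs⟩ ⟨t, ht⟩)
            ((h' c).2 k hk g' hg' ⟨t, ht⟩ h2)
        · intro x y d h c
          have := h (d * c)
          simpa only [mul_assoc] using this
      have hHR : ∀ p ∈ H, R p.1 p.2 := by
        intro p hp c
        have hpc := hrm _ _ c (hHr p hp)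
        exact ⟨⟨fun ⟨t, ht⟩ => ⟨t, hre.trans (hre.symm hpc) ht⟩,
          fun ⟨t, ht⟩ => ⟨t, hre.trans hpc ht⟩⟩,
          fun g hg g' hg' h h' => k2 p (Or.inr hp) g hg g' hg' c h h'⟩
      have h1 := (hmin R hR hHR _ _ huv 1).2
      simp only [mul_one] at h1
      obtain ⟨g, hg, hgu⟩ := (hA (a * u)).1 ⟨u, hre.refl _⟩
      obtain ⟨g', hg', hgv⟩ := (hA (a * v)).1 ⟨v, hre.refl _⟩
      exact hre'.trans (k1 g hg u hgu)
        (hre'.trans (h1 g hg g' hg' hgu hgv) (hre'.symm (k1 g' hg' v hgv)))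
end

section
/- For every group G and every endomorphism θ : G → G, the Bruck–Reilly extension BR(G, θ) is coherent, i.e. both right and left coherent. -/
def IsLeftCongruence {M : Type*} [Monoid M] (r : M → M → Prop) : Prop :=
  Equivalence r ∧ ∀ a b c : M, r a b → r (c * a) (c * b)

def LCongGenBy {M : Type*} [Monoid M] (H : Set (M × M)) (r : M → M → Prop) : Prop :=
  IsLeftCongruence r ∧ (∀ p ∈ H, r p.1 p.2) ∧
    ∀ r' : M → M → Prop, IsLeftCongruence r' → (∀ p ∈ H, r' p.1 p.2) →
      ∀ x y : M, r x y → r' x y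

def FGLeftCongruence {M : Type*} [Monoid M] (r : M → M → Prop) : Prop :=
  ∃ H : Set (M × M), H.Finite ∧ LCongGenBy H r

def LeftCoherent (M : Type*) [Monoid M] : Prop :=
  ∀ r : M → M → Prop, FGLeftCongruence r → ∀ a b : M,
    (∃ C : Finset M,
      {x : M | (∃ s : M, r x (s * a)) ∧ (∃ t : M, r x (t * b))} =
        ⋃ c ∈ C, {x : M | ∃ s : M, r x (s * c)}) ∧
    FGLeftCongruence (fun u v : M => r (u * a) (v * a))

theorem ann_isRC {M : Type*} [Monoid M] {r : M → M → Prop} (hr : IsRightCongruence r) (a : M) :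
    IsRightCongruence (fun u v : M => r (a * u) (a * v)) := by
  obtain ⟨he, hc⟩ := hr
  refine ⟨⟨fun x => he.refl _, fun h => he.symm h, fun h k => he.trans h k⟩, ?_⟩
  intro x y c h
  have := hc _ _ c h
  simpa [mul_assoc] using this

theorem FGRightCongruence.isRC {M : Type*} [Monoid M] {r : M → M → Prop}
    (h : FGRightCongruence r) : IsRightCongruence r := by
  obtain ⟨H, _, h, _⟩ := h
  exact h

/-- Finite generation of annihilators does not depend on the chosen generator. -/
theorem fg_ann_change {M : Type*} [Monoid M] {r : M → M → Prop} (hr : IsRightCongruence r)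
    (a c s t : M) (h1 : r a (c * s)) (h2 : r c (a * t))
    (hf : FGRightCongruence (fun u v : M => r (c * u) (c * v))) :
    FGRightCongruence (fun u v : M => r (a * u) (a * v)) := by
  obtain ⟨H, hfin, _, hH, hmin⟩ := hf
  obtain ⟨he, hc⟩ := id hr
  have h2' : ∀ u, r (c * u) (a * (t * u)) := fun u => by
    have := hc _ _ u h2
    rwa [mul_assoc a] at this
  have h1' : ∀ u, r (a * u) (c * (s * u)) := fun u => by
    have := hc _ _ u h1
    rwa [mul_assoc c] at this
  refine ⟨insert (1, t * s) ((fun p : M × M => (t * p.1, t * p.2)) '' H),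
    (hfin.image _).insert _, ann_isRC hr a, ?_, ?_⟩
  · intro p hp
    rcases hp with rfl | ⟨p, hp, rfl⟩
    · simp only [mul_one]
      exact he.trans h1 (h2' s)
    · exact he.trans (he.symm (h2' _)) (he.trans (hH p hp) (h2' _))
  · intro r' hr' hgen x y hxy
    obtain ⟨he', hc'⟩ := id hr'
    have key := hmin (fun u v => r' (t * u) (t * v)) (ann_isRC hr' t)
      (fun p hp => hgen _ (Or.inr ⟨p, hp, rfl⟩)) (s * x) (s * y)
      (he.trans (he.symm (h1' x)) (he.trans hxy (h1' y)))
    have h0 : ∀ u, r' u (t * (s * u)) := fun u => by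
      have := hc' _ _ u (hgen (1, t * s) (Or.inl rfl))
      simpa [mul_assoc] using this
    exact he'.trans (h0 x) (he'.trans key (he'.symm (h0 y)))

theorem right_aux {G : Type*} [Group G] (θ : G →* G)
    {S : Type*} [Monoid S] (f : ℕ × G × ℕ → S)
    (hbij : Function.Bijective f)
    (hone : f (0, 1, 0) = 1)
    (hmul : ∀ (a : ℕ) (g : G) (b : ℕ) (c : ℕ) (h : G) (d : ℕ),
      f (a, g, b) * f (c, h, d) =
        f (a + (max b c - b),
           (⇑θ)^[max b c - b] g * (⇑θ)^[max b c - c] h,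
           d + (max b c - c))) :
    RightCoherent S := by
  have it1 : ∀ n, (⇑θ)^[n] 1 = 1 := fun n => iterate_map_one θ n
  have hsurj : ∀ x : S, ∃ a g b, f (a, g, b) = x := fun x => by
    obtain ⟨⟨a, g, b⟩, h⟩ := hbij.2 x
    exact ⟨a, g, b, h⟩
  have hqp : ∀ a g b, 1 ≤ a → f (1, 1, 0) * (f (0, 1, 1) * f (a, g, b)) = f (a, g, b) := by
    intro a g b ha
    obtain ⟨n, rfl⟩ : ∃ n, a = n + 1 := ⟨a - 1, by omega⟩
    simp [hmul, it1, Nat.add_comm]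
  -- shift by one
  have shift : ∀ r : S → S → Prop, FGRightCongruence r →
      FGRightCongruence (fun u v => r (f (1, 1, 0) * u) (f (1, 1, 0) * v)) := by
    intro r hfg
    have hr := hfg.isRC
    by_cases hcase : ∃ t, r 1 (f (1, 1, 0) * t)
    · obtain ⟨t, ht⟩ := hcase
      refine fg_ann_change hr _ 1 (f (1, 1, 0)) t ?_ ht (by simpa using hfg)
      rw [one_mul]; exact hr.1.refl _
    · have hno : ∀ a g b, 1 ≤ a → ¬ r 1 (f (a, g, b)) := fun a g b ha h =>
        hcase ⟨_, by rw [hqp a g b ha]; exact h⟩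
      have hlev : ∀ g b c h d, 1 ≤ c → ¬ r (f (0, g, b)) (f (c, h, d)) := by
        intro g b c h d hc hx
        have := hr.2 _ _ (f (b, g⁻¹, 0)) hx
        rw [hmul, hmul] at this
        simp only [max_self, Nat.sub_self, Function.iterate_zero, id, mul_inv_cancel, hone,
          Nat.add_zero] at this
        exact hno _ _ _ (by omega) this
      have hlt : ∀ g b h d, b < d → ¬ r (f (0, g, b)) (f (0, h, d)) := by
        intro g b h d hc hx
        have := hr.2 _ _ (f (d, h⁻¹, 0)) hx
        rw [hmul, hmul] at this
        simp only [max_self, Nat.sub_self, Function.iterate_zero, id, mul_inv_cancel, hone,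
          Nat.add_zero] at this
        exact hno _ _ _ (by omega) (hr.1.symm this)
      obtain ⟨H, hfin, _, hH, hmin⟩ := hfg
      refine ⟨(fun p : S × S => (f (0, 1, 1) * p.1, f (0, 1, 1) * p.2)) '' H, hfin.image _,
        ann_isRC hr _, ?_, ?_⟩
      · rintro _ ⟨⟨u, v⟩, hp, rfl⟩
        have huv : r u v := hH _ hp
        obtain ⟨a, g, b, rfl⟩ := hsurj u
        obtain ⟨c, h, d, rfl⟩ := hsurj v
        simp only
        rcases Nat.eq_zero_or_pos a with rfl | ha <;> rcases Nat.eq_zero_or_pos c with rfl | hc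
        · rcases lt_trichotomy b d with hbd | rfl | hbd
          · exact absurd huv (hlt _ _ _ _ hbd)
          · have := hr.2 _ _ (f (b + 1, 1, b + 1)) huv
            simpa [hmul, it1, Nat.add_comm] using this
          · exact absurd (hr.1.symm huv) (hlt _ _ _ _ hbd)
        · exact absurd huv (hlev _ _ _ _ _ hc)
        · exact absurd (hr.1.symm huv) (hlev _ _ _ _ _ ha)
        · rw [hqp _ _ _ ha, hqp _ _ _ hc]; exact huv
      · intro r' hr' hgen x y hxy
        have key := hmin _ (ann_isRC hr' (f (0, 1, 1)))
          (fun p hp => hgen _ ⟨p, hp, rfl⟩) _ _ hxy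
        have hpq : f (0, 1, 1) * f (1, 1, 0) = 1 := by simp [hmul, hone]
        simpa [← mul_assoc, hpq] using key
  have shiftk : ∀ r : S → S → Prop, FGRightCongruence r → ∀ k : ℕ,
      FGRightCongruence (fun u v => r (f (k, 1, 0) * u) (f (k, 1, 0) * v)) := by
    intro r hfg k
    induction k with
    | zero => simpa [hone] using hfg
    | succ k ih =>
      have := shift _ ih
      have e : f (k, 1, 0) * f (1, 1, 0) = f (k + 1, 1, 0) := by simp [hmul]
      simpa [← mul_assoc, e] using this
  intro r hfg a b
  have hr := hfg.isRC
  constructor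
  · have chain : ∀ a b : S, (∃ s, a = b * s) →
      {x : S | (∃ s : S, r x (a * s)) ∧ (∃ t : S, r x (b * t))} = {x | ∃ s : S, r x (a * s)} := by
      rintro a b ⟨s, rfl⟩
      ext x
      simp only [Set.mem_setOf_eq, and_iff_left_iff_imp]
      rintro ⟨t, ht⟩
      exact ⟨s * t, by rwa [← mul_assoc]⟩
    have tot : ∀ a g b c h d, c ≤ a → ∃ s, f (a, g, b) = f (c, h, d) * s := by
      intro a g b c h d hca
      refine ⟨f (d, h⁻¹, 0) * f (a - c, g, b), ?_⟩
      have e : c + (a - c) = a := by omega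
      rw [← mul_assoc, hmul]
      simp [hmul, it1, e]
    obtain ⟨a1, a2, a3, rfl⟩ := hsurj a
    obtain ⟨b1, b2, b3, rfl⟩ := hsurj b
    rcases le_total b1 a1 with h | h
    · refine ⟨{f (a1, a2, a3)}, ?_⟩
      rw [chain _ _ (tot _ _ _ _ _ _ h)]
      simp
    · refine ⟨{f (b1, b2, b3)}, ?_⟩
      have := chain _ _ (tot _ b2 b3 _ a2 a3 h)
      simp only [and_comm] at this ⊢
      rw [this]
      simp
  · obtain ⟨k, g, l, rfl⟩ := hsurj a
    refine fg_ann_change hr _ (f (k, 1, 0)) (f (0, g, l)) (f (l, g⁻¹, 0)) ?_ ?_ (shiftk r hfg k)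
    · have : f (k, g, l) = f (k, 1, 0) * f (0, g, l) := by simp [hmul]
      rw [← this]; exact hr.1.refl _
    · have : f (k, 1, 0) = f (k, g, l) * f (l, g⁻¹, 0) := by simp [hmul]
      rw [← this]; exact hr.1.refl _

theorem isRC_op {M : Type*} [Monoid M] {r : M → M → Prop} (h : IsLeftCongruence r) :
    IsRightCongruence (fun x y : Mᵐᵒᵖ => r x.unop y.unop) :=
  ⟨⟨fun _ => h.1.refl _, fun k => h.1.symm k, fun k l => h.1.trans k l⟩,
    fun _ _ c k => h.2 _ _ c.unop k⟩

theorem isLC_unop {M : Type*} [Monoid M] {r : Mᵐᵒᵖ → Mᵐᵒᵖ → Prop} (h : IsRightCongruence r) :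
    IsLeftCongruence (fun x y : M => r (.op x) (.op y)) :=
  ⟨⟨fun _ => h.1.refl _, fun k => h.1.symm k, fun k l => h.1.trans k l⟩,
    fun _ _ c k => h.2 _ _ (.op c) k⟩

theorem fg_op {M : Type*} [Monoid M] {r : M → M → Prop} (h : FGLeftCongruence r) :
    FGRightCongruence (fun x y : Mᵐᵒᵖ => r x.unop y.unop) := by
  obtain ⟨H, hfin, hr, hH, hmin⟩ := h
  refine ⟨(fun p : M × M => (MulOpposite.op p.1, MulOpposite.op p.2)) '' H, hfin.image _,
    isRC_op hr, ?_, ?_⟩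
  · rintro _ ⟨p, hp, rfl⟩
    exact hH p hp
  · intro r' hr' hgen x y hxy
    exact hmin _ (isLC_unop hr') (fun p hp => hgen _ ⟨p, hp, rfl⟩) _ _ hxy

theorem fg_unop {M : Type*} [Monoid M] {r : Mᵐᵒᵖ → Mᵐᵒᵖ → Prop} (h : FGRightCongruence r) :
    FGLeftCongruence (fun x y : M => r (.op x) (.op y)) := by
  obtain ⟨H, hfin, hr, hH, hmin⟩ := h
  refine ⟨(fun p : Mᵐᵒᵖ × Mᵐᵒᵖ => (p.1.unop, p.2.unop)) '' H, hfin.image _,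
    isLC_unop hr, ?_, ?_⟩
  · rintro _ ⟨p, hp, rfl⟩
    exact hH p hp
  · intro r' hr' hgen x y hxy
    exact hmin _ (isRC_op hr') (fun p hp => hgen _ ⟨p, hp, rfl⟩) _ _ hxy

theorem left_of_op {M : Type*} [Monoid M] (h : RightCoherent Mᵐᵒᵖ) : LeftCoherent M := by
  classical
  intro r hr a b
  obtain ⟨⟨C, hC⟩, hann⟩ := h _ (fg_op hr) (.op a) (.op b)
  refine ⟨⟨C.image MulOpposite.unop, ?_⟩, fg_unop hann⟩
  ext x
  have hx := Set.ext_iff.1 hC (.op x)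
  simpa [MulOpposite.exists] using hx

theorem stmt2 {G : Type*} [Group G] (θ : G →* G)
    {S : Type*} [Monoid S] (f : ℕ × G × ℕ → S)
    (hbij : Function.Bijective f)
    (hone : f (0, 1, 0) = 1)
    (hmul : ∀ (a : ℕ) (g : G) (b : ℕ) (c : ℕ) (h : G) (d : ℕ),
      f (a, g, b) * f (c, h, d) =
        f (a + (max b c - b),
           (⇑θ)^[max b c - b] g * (⇑θ)^[max b c - c] h,
           d + (max b c - c))) :
    RightCoherent S ∧ LeftCoherent S := by
  refine ⟨right_aux θ f hbij hone hmul, left_of_op ?_⟩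
  refine right_aux θ (fun x => MulOpposite.op (f (x.2.2, x.2.1⁻¹, x.1))) ⟨?_, ?_⟩ ?_ ?_
  · rintro ⟨a, g, b⟩ ⟨c, h, d⟩ e
    have := hbij.1 (MulOpposite.op_injective e)
    simp at this ⊢
    tauto
  · intro y
    obtain ⟨⟨a, g, b⟩, h⟩ := hbij.2 y.unop
    exact ⟨(b, g⁻¹, a), by simp [h]⟩
  · simp [hone]
  · intro a g b c h d
    simp only [← MulOpposite.op_mul, hmul, max_comm c b, mul_inv_rev, iterate_map_inv]
end

section
/- Let S = M(G; I, Λ; P)¹ be a Rees matrix monoid over a group G. Then: (1) for every finitely generated right congruence ρ on S and all a, b, x, y ∈ S, the right ideals (aS)ρ ∩ (bS)ρ and (aS, x) ∩ (bS, y) of S are finitely generated, and hence S is right coherent; and (2) S is weakly right noetherian if and only if I is finite. -/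
/-- Criterion for an annihilator to be finitely generated. -/
theorem ann_fg_of_psi {S : Type*} [Monoid S] (r : S → S → Prop) (hr : FGRightCongruence r)
    (a : S) (psi : S → S)
    (h1 : ∀ z s, (∃ t, r z (a * t)) → psi (z * s) = psi z * s)
    (h2 : ∀ z, (∃ t, r z (a * t)) → r z (a * psi z))
    (h4 : ∀ z s, (∃ t, r (z * s) (a * t)) → (∃ t, r z (a * t)) ∨ ∀ y, r z y → y = z) :
    FGRightCongruence (fun u v : S => r (a * u) (a * v)) := by
  obtain ⟨H, hHf, ⟨hre, hrm⟩, hH, hmin⟩ := hr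
  have haK : ∀ u, ∃ t, r (a * u) (a * t) := fun u => ⟨u, hre.refl _⟩
  refine ⟨insert (1, psi a) ((fun p : S × S => (psi p.1, psi p.2)) ''
    {p ∈ H | ∃ t, r p.1 (a * t)}), ?_, ⟨⟨⟨fun _ => hre.refl _, fun h => hre.symm h,
      fun h h' => hre.trans h h'⟩, ?_⟩, ?_, ?_⟩⟩
  · exact ((hHf.subset (Set.sep_subset _ _)).image _).insert _
  · intro x y c h
    have := hrm _ _ c h
    simpa only [mul_assoc] using this
  · rintro p (rfl | ⟨⟨c, d⟩, ⟨hcd, t, ht⟩, rfl⟩)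
    · have := h2 a ⟨1, by simpa using hre.refl a⟩
      simpa using this
    · have hcd' := hH _ hcd
      exact hre.trans (hre.symm (h2 c ⟨t, ht⟩))
        (hre.trans hcd' (h2 d ⟨t, hre.trans (hre.symm hcd') ht⟩))
  · intro σ ⟨hσe, hσm⟩ hσ u v huv
    have key := hmin (fun x y => r x y ∧ ((∃ t, r x (a * t)) → σ (psi x) (psi y))) ?_ ?_ _ _ huv
    · have k := key.2 (haK u)
      have ha : ∃ t, r a (a * t) := ⟨1, by simpa using hre.refl a⟩
      rw [h1 a u ha, h1 a v ha] at k
      have h0 : σ 1 (psi a) := hσ (1, psi a) (Set.mem_insert _ _)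
      have hu := hσm _ _ u h0
      have hv := hσm _ _ v h0
      rw [one_mul] at hu hv
      exact hσe.trans hu (hσe.trans k (hσe.symm hv))
    · refine ⟨⟨fun x => ⟨hre.refl _, fun _ => hσe.refl _⟩, ?_, ?_⟩, ?_⟩
      · rintro x y ⟨h, h'⟩
        exact ⟨hre.symm h, fun ⟨t, ht⟩ => hσe.symm (h' ⟨t, hre.trans h ht⟩)⟩
      · rintro x y z ⟨h, h'⟩ ⟨k, k'⟩
        exact ⟨hre.trans h k, fun ⟨t, ht⟩ =>
          hσe.trans (h' ⟨t, ht⟩) (k' ⟨t, hre.trans (hre.symm h) ht⟩)⟩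
      · rintro x y c ⟨h, h'⟩
        refine ⟨hrm _ _ _ h, fun hx => ?_⟩
        rcases h4 x c hx with ⟨t, ht⟩ | hs
        · rw [h1 x c ⟨t, ht⟩, h1 y c ⟨t, hre.trans (hre.symm h) ht⟩]
          exact hσm _ _ _ (h' ⟨t, ht⟩)
        · rw [hs y h]
          exact hσe.refl _
    · intro p hp
      exact ⟨hH p hp, fun ht => hσ _ (Or.inr ⟨p, ⟨hp, ht⟩, rfl⟩)⟩

theorem fgRightIdeal_of_one {S : Type*} [Monoid S] (K : Set S) (hK : IsRightIdeal K)
    (h1 : (1 : S) ∈ K) : FGRightIdeal K := by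
  refine ⟨{1}, ?_⟩
  ext x
  simp only [Finset.mem_singleton, Set.iUnion_iUnion_eq_left, one_mul, Set.mem_setOf_eq,
    exists_eq', iff_true]
  simpa using hK 1 h1 x

theorem stmt3 {G : Type*} [Group G] {I L : Type*} [Nonempty I] [Nonempty L]
    (P : L → I → G)
    {S : Type*} [Monoid S] (f : I × G × L → S)
    (hinj : Function.Injective f)
    (hne1 : ∀ p : I × G × L, f p ≠ 1)
    (hcover : ∀ s : S, s = 1 ∨ ∃ p : I × G × L, f p = s)
    (hmul : ∀ (i : I) (a : G) (l : L) (j : I) (b : G) (m : L),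
      f (i, a, l) * f (j, b, m) = f (i, a * P l j * b, m)) :
    ((∀ r : S → S → Prop, FGRightCongruence r → ∀ a b x y : S,
      FGRightIdeal ({s : S | ∃ t : S, r s (a * t)} ∩ {s : S | ∃ t : S, r s (b * t)}) ∧
      FGRightIdeal ({t : S | ∃ u : S, x * t = a * u} ∩ {t : S | ∃ v : S, y * t = b * v})) ∧
     RightCoherent S) ∧
    (WeaklyRightNoetherian S ↔ Finite I) := by
  classical
  obtain ⟨i0⟩ := ‹Nonempty I›
  obtain ⟨l0⟩ := ‹Nonempty L›
  have hdiv : ∀ i g l g' l', ∃ s, f (i, g', l') = f (i, g, l) * s := by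
    intro i g l g' l'
    refine ⟨f (i, (g * P l i)⁻¹ * g', l'), ?_⟩
    rw [hmul]
    congr 3
    group
  have hR : ∀ i g l s, ∃ g' l', f (i, g, l) * s = f (i, g', l') := by
    intro i g l s
    rcases hcover s with rfl | ⟨⟨j, b, m⟩, rfl⟩
    · exact ⟨g, l, mul_one _⟩
    · exact ⟨_, _, hmul _ _ _ _ _ _⟩
  have hfin : ∀ (K : Set S), IsRightIdeal K → ∀ F : Set I, F.Finite →
      (∀ s ∈ K, ∃ i ∈ F, ∃ g l, s = f (i, g, l)) → FGRightIdeal K := by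
    intro K hK F hF hs
    refine ⟨(hF.toFinset.image (fun i => f (i, 1, l0))).filter (· ∈ K), ?_⟩
    ext x
    simp only [Set.mem_iUnion, Finset.mem_filter, Finset.mem_image, Set.Finite.mem_toFinset,
      Set.mem_setOf_eq, exists_prop]
    constructor
    · intro hx
      obtain ⟨i, hi, g, l, rfl⟩ := hs x hx
      obtain ⟨s, h⟩ := hdiv i g l 1 l0
      exact ⟨f (i, 1, l0), ⟨⟨i, hi, rfl⟩, h ▸ hK _ hx s⟩, hdiv i 1 l0 g l⟩
    · rintro ⟨c, ⟨-, hc⟩, s, rfl⟩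
      exact hK _ hc s
  -- a right ideal of the form `Kρ`
  have hone : ∀ r : S → S → Prop, IsRightCongruence r → ∀ p, r 1 (f p) →
      ∀ a, ∃ t, r 1 (a * t) := by
    rintro r ⟨hre, hrm⟩ ⟨j, y, m⟩ h a
    rcases hcover a with rfl | ⟨⟨i, g, l⟩, rfl⟩
    · exact ⟨1, by simpa using hre.refl 1⟩
    · obtain ⟨t, ht⟩ := hdiv i g l (P m i)⁻¹ m
      refine ⟨t, ?_⟩
      rw [← ht]
      have := hrm _ _ (f (i, (P m i)⁻¹, m)) h
      rw [one_mul, hmul, mul_inv_cancel_right] at this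
      exact hre.trans h (hre.symm this)
  have hKr : ∀ r : S → S → Prop, FGRightCongruence r → ∀ a, (¬ ∃ t, r 1 (a * t)) →
      ∃ F : Set I, F.Finite ∧ ∀ s, (∃ t, r s (a * t)) → ∃ i ∈ F, ∃ g l, s = f (i, g, l) := by
    rintro r ⟨H, hHf, hr, hH, hmin⟩ a ha
    obtain ⟨hre, hrm⟩ := id hr
    rcases hcover a with rfl | ⟨⟨i, g, l⟩, rfl⟩
    · exact absurd ⟨1, by simpa using hre.refl 1⟩ ha
    have hno : ∀ y, r 1 y → y = 1 := by
      intro y hy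
      rcases hcover y with rfl | ⟨p, rfl⟩
      · rfl
      · exact absurd (hone r hr p hy _) ha
    have hidx : ∀ s : S, ∃ j : I, ∀ p, f p = s → p.1 = j := by
      intro s
      rcases hcover s with rfl | ⟨p, rfl⟩
      · exact ⟨i0, fun p hp => absurd hp (hne1 p)⟩
      · exact ⟨p.1, fun q hq => by rw [hinj hq]⟩
    choose idx hidx using hidx
    set F : Set I := insert i ((fun p : S × S => idx p.1) '' H ∪ (fun p : S × S => idx p.2) '' H)
      with hF
    refine ⟨F, ((hHf.image _).union (hHf.image _)).insert _, ?_⟩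
    rintro s ⟨t, hst⟩
    have key := hmin (fun x y => x = y ∨ ((∃ i ∈ F, ∃ g l, x = f (i, g, l)) ∧
      (∃ i ∈ F, ∃ g l, y = f (i, g, l)))) ?_ ?_ _ _ hst
    · rcases key with rfl | h
      · obtain ⟨g', l', h⟩ := hR i g l t
        exact ⟨i, Set.mem_insert _ _, g', l', h⟩
      · exact h.1
    · refine ⟨⟨fun _ => Or.inl rfl, ?_, ?_⟩, ?_⟩
      · rintro x y (rfl | h)
        · exact Or.inl rfl
        · exact Or.inr h.symm
      · rintro x y z (rfl | h) (rfl | h')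
        · exact Or.inl rfl
        · exact Or.inr h'
        · exact Or.inr h
        · exact Or.inr ⟨h.1, h'.2⟩
      · rintro x y c (rfl | ⟨⟨j, hj, b, m, rfl⟩, ⟨j', hj', b', m', rfl⟩⟩)
        · exact Or.inl rfl
        · exact Or.inr ⟨⟨j, hj, hR _ _ _ _⟩, ⟨j', hj', hR _ _ _ _⟩⟩
    · rintro ⟨c, d⟩ hcd
      have hr1 := hH _ hcd
      rcases hcover c with rfl | ⟨⟨j, b, m⟩, rfl⟩
      · exact Or.inl (hno _ hr1).symm
      rcases hcover d with rfl | ⟨⟨j', b', m'⟩, rfl⟩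
      · exact Or.inl (hno _ (hre.symm hr1))
      · refine Or.inr ⟨⟨j, ?_, b, m, rfl⟩, ⟨j', ?_, b', m', rfl⟩⟩
        · exact Or.inr (Or.inl ⟨_, hcd, (hidx _ _ rfl).symm⟩)
        · exact Or.inr (Or.inr ⟨_, hcd, (hidx _ _ rfl).symm⟩)
  have hrid : ∀ r : S → S → Prop, IsRightCongruence r → ∀ a,
      IsRightIdeal {s : S | ∃ t : S, r s (a * t)} := by
    rintro r ⟨hre, hrm⟩ a s ⟨t, ht⟩ c
    exact ⟨t * c, by rw [← mul_assoc]; exact hrm _ _ c ht⟩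
  have hq : ∀ a x : S, IsRightIdeal {t : S | ∃ u : S, x * t = a * u} := by
    rintro a x t ⟨u, hu⟩ s
    exact ⟨u * s, by rw [← mul_assoc, hu, mul_assoc]⟩
  have hqF : ∀ a x : S, (¬ ∃ u, x * 1 = a * u) → ∃ F : Set I, F.Finite ∧
      ∀ t, (∃ u, x * t = a * u) → ∃ i ∈ F, ∃ g l, t = f (i, g, l) := by
    intro a x h
    rcases hcover a with rfl | ⟨⟨i, g, l⟩, rfl⟩
    · exact absurd ⟨x, by simp⟩ h
    refine ⟨{i}, Set.finite_singleton i, ?_⟩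
    rintro t ⟨u, hu⟩
    refine ⟨i, rfl, ?_⟩
    obtain ⟨g', l', h'⟩ := hR i g l u
    rcases hcover x with rfl | ⟨⟨j, b, m⟩, rfl⟩
    · exact ⟨g', l', by rw [← h', ← hu, one_mul]⟩
    · exfalso
      obtain ⟨g2, l2, h2⟩ := hR j b m t
      rw [h2, h'] at hu
      have := congrArg Prod.fst (hinj hu)
      simp only at this
      subst this
      obtain ⟨v, hv⟩ := hdiv j g l b m
      exact h ⟨v, by rw [mul_one, hv]⟩
  have hinter : ∀ K K' : Set S, IsRightIdeal K → IsRightIdeal K' →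
      ((1 : S) ∉ K → ∃ F : Set I, F.Finite ∧ ∀ s ∈ K, ∃ i ∈ F, ∃ g l, s = f (i, g, l)) →
      ((1 : S) ∉ K' → ∃ F : Set I, F.Finite ∧ ∀ s ∈ K', ∃ i ∈ F, ∃ g l, s = f (i, g, l)) →
      FGRightIdeal (K ∩ K') := by
    intro K K' hK hK' h h'
    have hKK : IsRightIdeal (K ∩ K') := fun a ha s => ⟨hK a ha.1 s, hK' a ha.2 s⟩
    by_cases h1 : (1 : S) ∈ K
    · by_cases h2 : (1 : S) ∈ K'
      · exact fgRightIdeal_of_one _ hKK ⟨h1, h2⟩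
      · obtain ⟨F, hF, hs⟩ := h' h2
        exact hfin _ hKK F hF fun s hs' => hs s hs'.2
    · obtain ⟨F, hF, hs⟩ := h h1
      exact hfin _ hKK F hF fun s hs' => hs s hs'.1
  have hA : ∀ r : S → S → Prop, FGRightCongruence r → ∀ a b : S,
      FGRightIdeal ({s : S | ∃ t : S, r s (a * t)} ∩ {s : S | ∃ t : S, r s (b * t)}) := by
    intro r hr a b
    have hr' : IsRightCongruence r := hr.choose_spec.2.1
    exact hinter _ _ (hrid r hr' a) (hrid r hr' b) (hKr r hr a) (hKr r hr b)
  refine ⟨⟨fun r hr a b x y => ⟨hA r hr a b, ?_⟩, ?_⟩, ?_⟩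
  · exact hinter _ _ (hq a x) (hq b y) (hqF a x) (hqF b y)
  · intro r hr a b
    have hr' : IsRightCongruence r := hr.choose_spec.2.1
    obtain ⟨hre, hrm⟩ := id hr'
    constructor
    · obtain ⟨C, hC⟩ := hA r hr a b
      refine ⟨C, ?_⟩
      ext x
      constructor
      · intro hx
        have hx' : x ∈ ({s : S | ∃ t : S, r s (a * t)} ∩ {s : S | ∃ t : S, r s (b * t)}) := hx
        rw [hC] at hx'
        simp only [Set.mem_iUnion, Set.mem_setOf_eq, exists_prop] at hx' ⊢
        obtain ⟨c, hc, s, rfl⟩ := hx'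
        exact ⟨c, hc, s, hre.refl _⟩
      · intro hx
        simp only [Set.mem_iUnion, Set.mem_setOf_eq, exists_prop] at hx
        obtain ⟨c, hc, s, hs⟩ := hx
        have : c * s ∈ ({s : S | ∃ t : S, r s (a * t)} ∩ {s : S | ∃ t : S, r s (b * t)}) := by
          rw [hC]
          simp only [Set.mem_iUnion, Set.mem_setOf_eq, exists_prop]
          exact ⟨c, hc, s, rfl⟩
        obtain ⟨⟨t, ht⟩, ⟨t', ht'⟩⟩ := this
        exact ⟨⟨t, hre.trans hs ht⟩, ⟨t', hre.trans hs ht'⟩⟩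
    · by_cases h1 : ∃ t, r 1 (a * t)
      · obtain ⟨t, ht⟩ := h1
        have hall : ∀ z, r z (a * (t * z)) := by
          intro z
          have := hrm _ _ z ht
          rwa [one_mul, mul_assoc] at this
        exact ann_fg_of_psi r hr a (fun z => t * z) (fun z s _ => (mul_assoc _ _ _).symm)
          (fun z _ => hall z) (fun z s _ => Or.inl ⟨_, hall z⟩)
      · have hT : ∀ j : I, ∃ T : S, (∃ x n t, r (f (j, x, n)) (a * t)) →
            ∀ x n, r (f (j, x, n)) (a * (T * f (j, x, n))) := by
          intro j
          by_cases h : ∃ x n t, r (f (j, x, n)) (a * t)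
          · obtain ⟨x, m, u, hu⟩ := h
            refine ⟨u * f (i0, (x * P m i0)⁻¹ * (P l0 j)⁻¹, l0), fun _ x' n => ?_⟩
            have := hrm _ _ (f (i0, (x * P m i0)⁻¹ * x', n)) hu
            rw [hmul, mul_inv_cancel_left] at this
            rw [mul_assoc u, hmul, inv_mul_cancel_right, ← mul_assoc]
            exact this
          · exact ⟨1, fun h' => absurd h' h⟩
        choose T hT using hT
        have hidx : ∀ s : S, ∃ j : I, ∀ p, f p = s → p.1 = j := by
          intro s
          rcases hcover s with rfl | ⟨p, rfl⟩
          · exact ⟨i0, fun p hp => absurd hp (hne1 p)⟩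
          · exact ⟨p.1, fun q hq => by rw [hinj hq]⟩
        choose idx hidx using hidx
        have hidx' : ∀ i g l, idx (f (i, g, l)) = i := fun i g l => (hidx _ _ rfl).symm
        refine ann_fg_of_psi r hr a (fun z => T (idx z) * z) ?_ ?_ ?_
        · intro z s hz
          rcases hcover z with rfl | ⟨⟨i, g, l⟩, rfl⟩
          · exact absurd hz h1
          · obtain ⟨g', l', h⟩ := hR i g l s
            simp only [mul_assoc]
            rw [h, hidx', hidx']
        · intro z hz
          rcases hcover z with rfl | ⟨⟨i, g, l⟩, rfl⟩
          · exact absurd hz h1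
          · simp only [hidx']
            exact hT i ⟨g, l, hz⟩ g l
        · intro z s hz
          rcases hcover z with rfl | ⟨⟨i, g, l⟩, rfl⟩
          · right
            intro y hy
            rcases hcover y with rfl | ⟨p, rfl⟩
            · rfl
            · exact absurd (hone r hr' p hy a) h1
          · left
            obtain ⟨g', l', h⟩ := hR i g l s
            rw [h] at hz
            exact ⟨_, hT i ⟨g', l', hz⟩ g l⟩
  · constructor
    · intro hW
      obtain ⟨A, hA⟩ := hW {s | s ≠ 1} (by
        intro s hs c
        rcases hcover s with rfl | ⟨⟨i, g, l⟩, rfl⟩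
        · exact absurd rfl hs
        · obtain ⟨g', l', h⟩ := hR i g l c
          rw [h]
          exact hne1 _)
      have hch : ∀ i : I, ∃ c ∈ A, ∃ g l, c = f (i, g, l) := by
        intro i
        have : f (i, 1, l0) ∈ {s : S | s ≠ 1} := hne1 _
        rw [hA] at this
        simp only [Set.mem_iUnion, Set.mem_setOf_eq, exists_prop] at this
        obtain ⟨c, hc, s, hs⟩ := this
        refine ⟨c, hc, ?_⟩
        rcases hcover c with rfl | ⟨⟨j, g, l⟩, rfl⟩
        · have h1 : (1 : S) ∈ {s : S | s ≠ 1} := by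
            rw [hA]
            simp only [Set.mem_iUnion, Set.mem_setOf_eq, exists_prop]
            exact ⟨1, hc, 1, by simp⟩
          exact absurd rfl h1
        · obtain ⟨g', l', h⟩ := hR j g l s
          rw [h] at hs
          have := congrArg Prod.fst (hinj hs)
          simp only at this
          subst this
          exact ⟨g, l, rfl⟩
      choose c hc g l hcf using hch
      refine Finite.of_injective (fun i => (⟨c i, hc i⟩ : A)) ?_
      intro i j hij
      have h : c i = c j := congrArg Subtype.val hij
      rw [hcf i, hcf j] at h
      exact congrArg Prod.fst (hinj h)
    · intro hI K hK
      by_cases h1 : (1 : S) ∈ K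
      · exact fgRightIdeal_of_one K hK h1
      · refine hfin K hK Set.univ Set.finite_univ fun s hs => ?_
        rcases hcover s with rfl | ⟨⟨i, g, l⟩, rfl⟩
        · exact absurd hs h1
        · exact ⟨i, trivial, g, l, rfl⟩
end

section
/- Let S = B(G; I)¹ be the Brandt monoid over a group G with I an infinite set, fix i ∈ I and g ∈ G, and let ρ be the right congruence on S generated by the single pair ((i,g,i), 1). Then S is right coherent, but the right ideal 0ρ = {s ∈ S : s ρ 0} of S is not finitely generated; in fact 0ρ = {0} ∪ ⋃_{j ∈ I, j ≠ i} ({j} × G × I). -/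
/-- `S` is the Brandt monoid over `G` with index set `I`, with zero `z`. -/
structure BrandtData {G I S : Type*} [Group G] [Monoid S] (f : I × G × I → S) (z : S) :
    Prop where
  inj : Function.Injective f
  fz : ∀ p : I × G × I, f p ≠ z
  f1 : ∀ p : I × G × I, f p ≠ 1
  z1 : z ≠ 1
  cover : ∀ s : S, s = 1 ∨ s = z ∨ ∃ p : I × G × I, f p = s
  mul_eq : ∀ (i : I) (a : G) (j : I) (b : G) (l : I),
      f (i, a, j) * f (j, b, l) = f (i, a * b, l)
  mul_ne : ∀ (i : I) (a : G) (j k : I) (b : G) (l : I), j ≠ k →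
      f (i, a, j) * f (k, b, l) = z
  zl : ∀ s : S, z * s = z
  zr : ∀ s : S, s * z = z

namespace BrandtData

/-- A right translate of a triple is zero or a triple with the same first coordinate. -/
theorem f_mul {G I S : Type*} [Group G] [Monoid S] {f : I × G × I → S} {z : S}
    (B : BrandtData f z) (j : I) (g : G) (k : I) (s : S) :
    f (j, g, k) * s = z ∨ ∃ y l, f (j, g, k) * s = f (j, g * y, l) := by
  rcases B.cover s with rfl | rfl | ⟨⟨m, h, l⟩, rfl⟩
  · right; exact ⟨1, k, by simp⟩
  · left; exact B.zr _
  · by_cases hk : k = m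
    · subst hk; right; exact ⟨h, l, B.mul_eq _ _ _ _ _⟩
    · left; exact B.mul_ne _ _ _ _ _ _ hk

/-- A left translate of a triple is zero or a triple with the same last coordinate. -/
theorem mul_f {G I S : Type*} [Group G] [Monoid S] {f : I × G × I → S} {z : S}
    (B : BrandtData f z) (s : S) (m : I) (h : G) (l : I) :
    s * f (m, h, l) = z ∨ ∃ i b, s * f (m, h, l) = f (i, b, l) := by
  rcases B.cover s with rfl | rfl | ⟨⟨i, b, k⟩, rfl⟩
  · right; exact ⟨m, h, by simp⟩
  · left; exact B.zl _
  · by_cases hk : k = m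
    · subst hk; right; exact ⟨i, b * h, B.mul_eq _ _ _ _ _⟩
    · left; exact B.mul_ne _ _ _ _ _ _ hk

theorem back {G I S : Type*} [Group G] [Monoid S] {f : I × G × I → S} {z : S}
    (B : BrandtData f z) (a s : S) (ha : a ≠ 1) (h : a * s ≠ z) : ∃ t, a * s * t = a := by
  rcases B.cover a with rfl | rfl | ⟨⟨j, g, k⟩, rfl⟩
  · exact absurd rfl ha
  · exact absurd (B.zl _) h
  · rcases B.f_mul j g k s with h' | ⟨y, l, h'⟩
    · exact absurd h' h
    · exact ⟨f (l, y⁻¹, k), by rw [h', B.mul_eq]; simp⟩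

theorem inter {G I S : Type*} [Group G] [Monoid S] {f : I × G × I → S} {z : S}
    (B : BrandtData f z) (r : S → S → Prop) (hr : IsRightCongruence r) (a b : S) :
    ∃ C : Finset S,
      {x : S | (∃ s : S, r x (a * s)) ∧ (∃ t : S, r x (b * t))} =
        ⋃ c ∈ C, {x : S | ∃ s : S, r x (c * s)} := by
  obtain ⟨he, hm⟩ := hr
  by_cases ha : a = 1
  · refine ⟨{b}, ?_⟩
    ext x
    simp only [Set.mem_ofPred_eq, Finset.mem_singleton, Set.iUnion_iUnion_eq_left]
    exact ⟨fun h => h.2, fun h => ⟨⟨x, by rw [ha, one_mul]; exact he.refl x⟩, h⟩⟩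
  by_cases hb : b = 1
  · refine ⟨{a}, ?_⟩
    ext x
    simp only [Set.mem_ofPred_eq, Finset.mem_singleton, Set.iUnion_iUnion_eq_left]
    exact ⟨fun h => h.1, fun h => ⟨h, ⟨x, by rw [hb, one_mul]; exact he.refl x⟩⟩⟩
  by_cases hx : ∃ x s t, r x (a * s) ∧ r x (b * t) ∧ ¬ r x z
  · obtain ⟨x, s, t, h1, h2, h3⟩ := hx
    refine ⟨{a}, ?_⟩
    ext y
    simp only [Set.mem_ofPred_eq, Finset.mem_singleton, Set.iUnion_iUnion_eq_left]
    refine ⟨fun h => h.1, fun h => ⟨h, ?_⟩⟩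
    obtain ⟨q, hq⟩ := h
    obtain ⟨w, hw⟩ := B.back a s ha (fun h => h3 (h ▸ h1))
    refine ⟨t * w * q, he.trans hq ?_⟩
    have := hm _ _ (w * q) (he.trans (he.symm h1) h2)
    rw [← mul_assoc, hw] at this
    simpa [mul_assoc] using this
  · refine ⟨{z}, ?_⟩
    ext y
    simp only [Set.mem_ofPred_eq, Finset.mem_singleton, Set.iUnion_iUnion_eq_left, B.zl]
    constructor
    · rintro ⟨⟨s, hs⟩, ⟨t, ht⟩⟩
      by_contra hc
      exact hx ⟨y, s, t, hs, ht, fun h => hc ⟨1, h⟩⟩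
    · rintro ⟨_, h⟩
      exact ⟨⟨z, by rw [B.zr]; exact h⟩, ⟨z, by rw [B.zr]; exact h⟩⟩

/-- The invariant separating classes. -/
def phi {G I S : Type*} [Group G] (f : I × G × I → S) (k : I) (C : I → Prop) (x : I → G)
    (θ : S → S → Prop) (u : S) : Set (G × I) :=
  {p | ∃ i b, u = f (i, b, p.2) ∧ C i ∧ θ (f (k, p.1, p.2)) (f (k, x i * b, p.2))}

theorem key {G I S : Type*} [Group G] [Monoid S] {f : I × G × I → S} {z : S}
    (B : BrandtData f z) (r : S → S → Prop) (hr : IsRightCongruence r)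
    (j : I) (g : G) (k : I) (haz : ¬ r (f (j, g, k)) z)
    (C : I → Prop) (hC : ∀ i y, r (f (i, 1, k)) (f (j, g * y, k)) → C i)
    (x : I → G) (hx : ∀ i, C i → r (f (i, 1, k)) (f (j, g * x i, k)))
    (w : S → G) (hw : ∀ i b l, w (f (i, b, l)) = x i * b) (hw1 : w 1 = x j)
    (θ : S → S → Prop) (hθ : IsRightCongruence θ) (u v : S) (huv : r u v)
    (hgen : r (f (j, g, k) * f (k, w u * (w v)⁻¹, k)) (f (j, g, k) * f (k, 1, k)) →
      θ (f (k, w u * (w v)⁻¹, k)) (f (k, 1, k))) (p : I × G × I) :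
    phi f k C x θ (u * f p) ⊆ phi f k C x θ (v * f p) := by
  obtain ⟨he, hm⟩ := hr
  obtain ⟨te, tm⟩ := hθ
  obtain ⟨m, h, l⟩ := p
  have hmv : ∀ i b l b' l', r (f (i, b, l)) z → r (f (i, b', l')) z := by
    intro i b l b' l' h
    have := hm _ _ (f (l, b⁻¹ * b', l')) h
    rw [B.mul_eq, B.zl] at this
    simpa using this
  have hCz : ∀ i b l, C i → ¬ r (f (i, b, l)) z := fun i b l hc h =>
    haz (hmv _ _ _ _ _ (he.trans (he.symm (hx i hc)) (hmv _ _ _ _ _ h)))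
  -- transport between rows
  have hrow : ∀ i b l, C i → r (f (i, b, l)) (f (j, g * x i * b, l)) := by
    intro i b l hc
    have := hm _ _ (f (k, b, l)) (hx i hc)
    rw [B.mul_eq, B.mul_eq, one_mul] at this
    exact this
  rintro ⟨y, l0⟩ ⟨i, b, hub, hCi, hθy⟩
  dsimp only at hub hθy
  have hl : l0 = l := by
    rcases B.mul_f u m h l with h' | ⟨i', b', h'⟩
    · exact absurd (hub.symm.trans h') (B.fz _)
    · have := B.inj (hub.symm.trans h')
      simp only [Prod.mk.injEq] at this
      exact this.2.2
  subst hl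
  have hR := hm _ _ (f (m, h, l0)) huv
  rcases B.mul_f v m h l0 with hv | ⟨i', b', hv⟩
  · rw [hv, hub] at hR
    exact absurd hR (hCz _ _ _ hCi)
  have hR' := hR
  rw [hv, hub] at hR'
  have hCi' : C i' := by
    apply hC i' (x i * (b * b'⁻¹))
    have h1 := hm _ _ (f (l0, b'⁻¹, k)) hR'
    rw [B.mul_eq, B.mul_eq, mul_inv_cancel] at h1
    have h2 := hrow i (b * b'⁻¹) k hCi
    rw [mul_assoc] at h2
    exact he.trans (he.symm h1) h2
  refine ⟨i', b', hv, hCi', te.trans hθy ?_⟩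
  dsimp only
  by_cases huv' : u = v
  · subst huv'
    have := B.inj (hub.symm.trans hv)
    simp only [Prod.mk.injEq] at this
    obtain ⟨rfl, rfl, -⟩ := this
    exact te.refl _
  -- value of `w`
  have hval : ∀ u i b, u * f (m, h, l0) = f (i, b, l0) → (u = 1 → m = j) →
      w u = x i * b * h⁻¹ := by
    intro u i b hu hj
    rcases B.cover u with rfl | rfl | ⟨⟨i1, b1, k1⟩, rfl⟩
    · rw [one_mul] at hu
      have := B.inj hu
      simp only [Prod.mk.injEq] at this
      obtain ⟨rfl, rfl, -⟩ := this
      rw [hw1, hj rfl]; simp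
    · rw [B.zl] at hu; exact absurd hu.symm (B.fz _)
    · by_cases hk : k1 = m
      · subst hk
        rw [B.mul_eq] at hu
        have := B.inj hu
        simp only [Prod.mk.injEq] at this
        obtain ⟨rfl, rfl, -⟩ := this
        rw [hw]; simp [mul_assoc]
      · rw [B.mul_ne _ _ _ _ _ _ hk] at hu; exact absurd hu.symm (B.fz _)
  have hone : ∀ v i' b', r 1 v → v ≠ 1 → v * f (m, h, l0) = f (i', b', l0) → m = j := by
    intro v i' b' h1 hv1 hv
    rcases B.cover v with rfl | rfl | ⟨⟨i1, b1, k1⟩, rfl⟩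
    · exact absurd rfl hv1
    · rw [B.zl] at hv; exact absurd hv.symm (B.fz _)
    · by_cases hk : k1 = m
      · subst hk
        by_contra hne
        have := hm _ _ (f (j, g, k)) h1
        rw [one_mul, B.mul_ne _ _ _ _ _ _ hne] at this
        exact haz this
      · rw [B.mul_ne _ _ _ _ _ _ hk] at hv; exact absurd hv.symm (B.fz _)
  have hwu := hval u i b hub (fun h1 => by
    subst h1; exact hone v i' b' huv (fun h => huv' h.symm) hv)
  have hwv := hval v i' b' hv (fun h1 => by
    subst h1; exact hone u i b (he.symm huv) huv' hub)
  have hq : w u * (w v)⁻¹ = x i * b * (x i' * b')⁻¹ := by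
    rw [hwu, hwv]; group
  rw [hq] at hgen
  have hg := hgen (by
    rw [B.mul_eq, B.mul_eq, mul_one]
    have h1 := hrow i (b * (x i' * b')⁻¹) k hCi
    have h2 := hm _ _ (f (l0, (x i' * b')⁻¹, k)) hR'
    rw [B.mul_eq, B.mul_eq] at h2
    have h3 := hrow i' (b' * (x i' * b')⁻¹) k hCi'
    have e1 : g * x i * (b * (x i' * b')⁻¹) = g * (x i * b * (x i' * b')⁻¹) := by group
    have e2 : g * x i' * (b' * (x i' * b')⁻¹) = g := by group
    rw [e1] at h1
    rw [e2] at h3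
    exact he.trans (he.symm h1) (he.trans h2 h3))
  have := tm _ _ (f (k, x i' * b', l0)) hg
  rw [B.mul_eq, B.mul_eq, inv_mul_cancel_right, one_mul] at this
  exact this

theorem ann {G I S : Type*} [Group G] [Monoid S] {f : I × G × I → S} {z : S}
    (B : BrandtData f z) (r : S → S → Prop) (hfg : FGRightCongruence r) (a : S) :
    FGRightCongruence (fun u v : S => r (a * u) (a * v)) := by
  classical
  have hfg0 := hfg
  obtain ⟨H, hH, hr, hHr, hmin⟩ := hfg
  have hrc := hr
  obtain ⟨he, hm⟩ := hr
  have hann : IsRightCongruence (fun u v : S => r (a * u) (a * v)) :=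
    ⟨⟨fun _ => he.refl _, fun h => he.symm h, fun h h' => he.trans h h'⟩,
      fun u v c h => by simpa [mul_assoc] using hm _ _ c h⟩
  by_cases haz : r a z
  · have hz : ∀ u, r (a * u) z := fun u => by
      have := hm _ _ u haz; rwa [B.zl] at this
    refine ⟨{(1, z)}, Set.finite_singleton _, hann, ?_, ?_⟩
    · intro p _
      exact he.trans (hz _) (he.symm (hz _))
    · intro r' hr' h' x y _
      have h1 : r' 1 z := h' (1, z) rfl
      have h2 : ∀ x, r' x z := fun x => by
        have := hr'.2 _ _ x h1; rwa [one_mul, B.zl] at this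
      exact hr'.1.trans (h2 x) (hr'.1.symm (h2 y))
  rcases B.cover a with rfl | rfl | ⟨⟨j, g, k⟩, rfl⟩
  · simpa using hfg0
  · exact absurd (he.refl _) haz
  let C : I → Prop := fun i => ∃ y, r (f (i, 1, k)) (f (j, g * y, k))
  obtain ⟨x, hx, hxj⟩ : ∃ x : I → G,
      (∀ i, C i → r (f (i, 1, k)) (f (j, g * x i, k))) ∧ x j = g⁻¹ := by
    refine ⟨fun i => if i = j then g⁻¹ else if h : C i then h.choose else 1, ?_, by simp⟩
    intro i hc
    by_cases hij : i = j
    · subst hij; simpa using he.refl _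
    · simp only [hij, if_false, hc, dif_pos]
      exact hc.choose_spec
  obtain ⟨w, hw, hw1⟩ : ∃ w : S → G, (∀ i b l, w (f (i, b, l)) = x i * b) ∧ w 1 = x j := by
    refine ⟨Function.extend f (fun p => x p.1 * p.2.1) (fun _ => x j), ?_, ?_⟩
    · intro i b l
      rw [B.inj.extend_apply]
    · rw [Function.extend_apply']
      rintro ⟨p, hp⟩
      exact B.f1 p hp
  let F : S × S → S × S := fun q => (f (k, w q.1 * (w q.2)⁻¹, k), f (k, 1, k))
  let T : Set (S × S) := insert (1, f (k, 1, k))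
    ((F '' (H ∪ Prod.swap '' H)) ∩ {q | r (f (j, g, k) * q.1) (f (j, g, k) * q.2)})
  refine ⟨T, ?_, hann, ?_, ?_⟩
  · exact (((hH.union (hH.image _)).image _).inter_of_left _).insert _
  · rintro p (rfl | ⟨-, hp⟩)
    · dsimp only
      rw [B.mul_eq]; simpa using he.refl _
    · exact hp
  intro θ hθ hT
  have te := hθ.1
  have tm := hθ.2
  let σ : S → S → Prop := fun u v => ∀ p, phi f k C x θ (u * f p) = phi f k C x θ (v * f p)
  have hσ : IsRightCongruence σ := by
    refine ⟨⟨fun _ _ => rfl, fun h p => (h p).symm, fun h h' p => (h p).trans (h' p)⟩, ?_⟩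
    intro u v c h p
    obtain ⟨m, b, l⟩ := p
    rw [mul_assoc, mul_assoc]
    rcases B.mul_f c m b l with h' | ⟨i, b', h'⟩
    · rw [h', B.zr, B.zr]
    · rw [h']; exact h _
  have hkey := fun u v huv hgen p => B.key r hrc j g k haz C (fun i y h => ⟨y, h⟩) x hx w hw hw1
    θ hθ u v huv hgen p
  have hrσ : ∀ u v, r u v → σ u v := by
    apply hmin σ hσ
    rintro ⟨u, v⟩ huv p
    have hruv : r u v := hHr _ huv
    apply Set.Subset.antisymm
    · refine hkey u v hruv (fun h => hT _ (Or.inr ⟨⟨(u, v), Or.inl huv, rfl⟩, h⟩)) p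
    · refine hkey v u (he.symm hruv)
        (fun h => hT _ (Or.inr ⟨⟨(v, u), Or.inr ⟨(u, v), huv, rfl⟩, rfl⟩, h⟩)) p
  have h1e : θ 1 (f (k, 1, k)) := hT _ (Or.inl rfl)
  have hred : ∀ u, θ u (f (k, 1, k) * u) := fun u => by
    have := tm _ _ u h1e; rwa [one_mul] at this
  have hae : ∀ u, f (j, g, k) * (f (k, 1, k) * u) = f (j, g, k) * u := fun u => by
    rw [← mul_assoc, B.mul_eq, mul_one]
  have hCj : C j := ⟨g⁻¹, by simpa using he.refl _⟩
  have hnz : ∀ y l, ¬ r (f (j, g, k) * f (k, y, l)) z := by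
    intro y l h
    have := hm _ _ (f (l, y⁻¹, k)) h
    rw [B.mul_eq, B.mul_eq, B.zl] at this
    apply haz
    simpa using this
  have main : ∀ u v, r (f (j, g, k) * u) (f (j, g, k) * v) →
      (u = z ∨ ∃ y l, u = f (k, 1 * y, l)) → (v = z ∨ ∃ y l, v = f (k, 1 * y, l)) → θ u v := by
    rintro u v h (rfl | ⟨y, l, rfl⟩) (rfl | ⟨y', l', rfl⟩)
    · exact te.refl _
    · rw [B.zr] at h; exact absurd (he.symm h) (hnz _ _)
    · rw [B.zr] at h; exact absurd h (hnz _ _)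
    · rw [one_mul, one_mul] at *
      have h1 := hrσ _ _ h (l, 1, l)
      rw [B.mul_eq, B.mul_eq, B.mul_eq, mul_one] at h1
      have h2 : (y, l) ∈ phi f k C x θ (f (j, g * y, l)) :=
        ⟨j, g * y, rfl, hCj, by
          have : x j * (g * y) = y := by rw [hxj]; group
          rw [this]; exact te.refl _⟩
      rw [h1] at h2
      obtain ⟨i, b, h3, -, h4⟩ := h2
      dsimp only at h3 h4
      by_cases hl : l' = l
      · subst hl
        rw [B.mul_eq] at h3
        have := B.inj h3
        simp only [Prod.mk.injEq, mul_one] at this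
        obtain ⟨rfl, rfl, -⟩ := this
        have e : x j * (g * y') = y' := by rw [hxj]; group
        rwa [e] at h4
      · rw [B.mul_ne _ _ _ _ _ _ hl] at h3
        exact absurd h3.symm (B.fz _)
  intro u v huv
  refine te.trans (hred u) (te.trans (main _ _ ?_ (B.f_mul _ _ _ _) (B.f_mul _ _ _ _))
    (te.symm (hred v)))
  rw [hae, hae]; exact huv

theorem zero_class {G I S : Type*} [Group G] [Monoid S] {f : I × G × I → S} {z : S}
    (B : BrandtData f z) (i : I) (g : G) (r : S → S → Prop)
    (hr : RCongGenBy ({(f (i, g, i), (1 : S))} : Set (S × S)) r) :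
    {s : S | r s z} = insert z (f '' {p : I × G × I | p.1 ≠ i}) := by
  obtain ⟨⟨he, hm⟩, hH, hmin⟩ := hr
  have h0 : r (f (i, g, i)) 1 := hH _ rfl
  set D : Set S := insert z (f '' {p : I × G × I | p.1 ≠ i}) with hD
  have hzD : z ∈ D := Or.inl rfl
  have hfD : ∀ m h l, f (m, h, l) ∈ D ↔ m ≠ i := by
    intro m h l
    constructor
    · rintro (h' | ⟨p, hp, h'⟩)
      · exact absurd h' (B.fz _)
      · rw [B.inj h'] at hp; exact hp
    · intro h'; exact Or.inr ⟨_, h', rfl⟩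
  have h1D : (1 : S) ∉ D := by
    rintro (h' | ⟨p, hp, h'⟩)
    · exact B.z1 h'.symm
    · exact B.f1 _ h'
  apply Set.Subset.antisymm
  · intro s hs
    have hσ : IsRightCongruence (fun u v : S => ∀ t, u * t ∈ D ↔ v * t ∈ D) :=
      ⟨⟨fun _ _ => Iff.rfl, fun h t => (h t).symm, fun h h' t => (h t).trans (h' t)⟩,
        fun u v c h t => by rw [mul_assoc, mul_assoc]; exact h _⟩
    have := hmin _ hσ (by
      rintro p rfl t
      dsimp only
      rw [one_mul]
      rcases B.cover t with rfl | rfl | ⟨⟨m, h, l⟩, rfl⟩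
      · rw [mul_one, hfD]; simp [h1D]
      · rw [B.zr]
      · by_cases hk : i = m
        · subst hk
          rw [B.mul_eq, hfD, hfD]
        · rw [B.mul_ne _ _ _ _ _ _ hk, hfD]
          exact ⟨fun _ h => hk h.symm, fun _ => hzD⟩) s z hs 1
    rw [mul_one, mul_one] at this
    exact this.2 hzD
  · rintro s (rfl | ⟨⟨m, h, l⟩, hp, rfl⟩)
    · exact he.refl _
    · have := hm _ _ (f (m, h, l)) h0
      rw [one_mul, B.mul_ne _ _ _ _ _ _ (fun h => hp h.symm)] at this
      exact he.symm this

theorem not_fg {G I S : Type*} [Group G] [Infinite I] [Monoid S] {f : I × G × I → S} {z : S}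
    (B : BrandtData f z) (i : I) :
    ¬ FGRightIdeal (insert z (f '' {p : I × G × I | p.1 ≠ i})) := by
  rintro ⟨A, hA⟩
  have hfin : (insert i (Prod.fst '' (f ⁻¹' (A : Set S)))).Finite :=
    ((A.finite_toSet.preimage B.inj.injOn).image _).insert _
  obtain ⟨j, hj⟩ := hfin.exists_notMem
  have hji : j ≠ i := fun h => hj (Or.inl h)
  have h1 : f (j, 1, i) ∈ insert z (f '' {p : I × G × I | p.1 ≠ i}) :=
    Or.inr ⟨_, hji, rfl⟩
  rw [hA] at h1
  simp only [Set.mem_iUnion, Set.mem_ofPred_eq] at h1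
  obtain ⟨a, haA, s, hs⟩ := h1
  have h2 : a ∈ insert z (f '' {p : I × G × I | p.1 ≠ i}) := by
    rw [hA]
    simp only [Set.mem_iUnion, Set.mem_ofPred_eq]
    exact ⟨a, haA, 1, by simp⟩
  rcases h2 with rfl | ⟨⟨m, h, l⟩, -, rfl⟩
  · rw [B.zl] at hs; exact B.fz _ hs
  · rcases B.f_mul m h l s with h' | ⟨y, l', h'⟩
    · exact B.fz _ (hs.trans h')
    · have := B.inj (hs.trans h')
      simp only [Prod.mk.injEq] at this
      exact hj (Or.inr ⟨(m, h, l), haA, this.1.symm⟩)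

end BrandtData

theorem stmt4 {G : Type*} [Group G] {I : Type*} [Infinite I]
    {S : Type*} [Monoid S] (f : I × G × I → S) (z : S)
    (hinj : Function.Injective f)
    (hfz : ∀ p : I × G × I, f p ≠ z) (hf1 : ∀ p : I × G × I, f p ≠ 1) (hz1 : z ≠ 1)
    (hcover : ∀ s : S, s = 1 ∨ s = z ∨ ∃ p : I × G × I, f p = s)
    (hmul_eq : ∀ (i : I) (a : G) (j : I) (b : G) (l : I),
      f (i, a, j) * f (j, b, l) = f (i, a * b, l))
    (hmul_ne : ∀ (i : I) (a : G) (j k : I) (b : G) (l : I), j ≠ k →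
      f (i, a, j) * f (k, b, l) = z)
    (hzmul : ∀ s : S, z * s = z ∧ s * z = z)
    (i : I) (g : G)
    (r : S → S → Prop)
    (hr : RCongGenBy ({(f (i, g, i), (1 : S))} : Set (S × S)) r) :
    RightCoherent S ∧
    ¬ FGRightIdeal {s : S | r s z} ∧
    {s : S | r s z} = insert z (f '' {p : I × G × I | p.1 ≠ i}) := by
  have B : BrandtData f z := ⟨hinj, hfz, hf1, hz1, hcover, hmul_eq, hmul_ne,
    fun s => (hzmul s).1, fun s => (hzmul s).2⟩
  have hD := B.zero_class i g r hr
  refine ⟨fun r' hr' a b => ⟨?_, B.ann r' hr' a⟩, ?_, hD⟩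
  · obtain ⟨H, -, h, -⟩ := hr'
    exact B.inter r' h a b
  · rw [hD]
    exact B.not_fg i
end

section
/- Let G be a group, θ : G → G a homomorphism, and S = EBR(G, θ)¹ the extended Bruck–Reilly extension of G with an identity adjoined. Then S is right coherent but not weakly right noetherian. -/
theorem ann_fg {M : Type*} [Monoid M] (r : M → M → Prop) (H : Set (M × M)) (hH : H.Finite)
    (hr : RCongGenBy H r) (a s w : M) (J : Set M) (hJ : ∀ x ∈ J, ∀ c, x * c ∈ J)
    (haJ : a ∈ J) (hw : ∀ x ∈ J, w * x = x) (hws : r w (a * s))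
    (hst : ∀ p ∈ H, ∀ t, p.1 * t ∈ J ↔ p.2 * t ∈ J)
    (hgen : ∀ p : M, ∃ t0, p * t0 ∈ J ∧ ∀ t, p * t ∈ J → ∃ t', t = t0 * t') :
    FGRightCongruence (fun u v : M => r (a * u) (a * v)) := by
  obtain ⟨⟨heq, hmulr⟩, hHr, hmin⟩ := hr
  choose t0 ht0 ht0' using hgen
  have hJr : ∀ x ∈ J, r x (a * (s * x)) := by
    intro x hx
    have := hmulr _ _ x hws
    rwa [hw x hx, mul_assoc] at this
  refine ⟨insert (1, s * a) ((fun p : M × M => (s * (p.1 * t0 p.1), s * (p.2 * t0 p.1))) '' H),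
    (hH.image _).insert _, ⟨⟨fun _ => heq.refl _, fun h => heq.symm h,
      fun h h' => heq.trans h h'⟩, ?_⟩, ?_, ?_⟩
  · intro x y c h
    have := hmulr _ _ c h
    simpa only [mul_assoc] using this
  · intro p hp
    rcases hp with rfl | ⟨p, hp, rfl⟩
    · simpa using hJr a haJ
    · have h1 := hJr _ (ht0 p.1)
      have h2 := hJr _ ((hst p hp _).1 (ht0 p.1))
      exact heq.trans (heq.symm h1) (heq.trans (hmulr _ _ _ (hHr p hp)) h2)
  · intro σ hσ hK u v huv
    obtain ⟨hσe, hσm⟩ := hσ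
    have key := hmin (fun x y => ∀ c, (x * c ∈ J ↔ y * c ∈ J) ∧
      (x * c ∈ J → σ (s * (x * c)) (s * (y * c)))) ?_ ?_ _ _ huv
    · have h1 := (key 1).2 (by simpa using hJ a haJ u)
      simp only [mul_one] at h1
      have h0 := hK _ (Set.mem_insert _ _)
      have hu := hσm _ _ u h0
      have hv := hσm _ _ v h0
      simp only [one_mul, mul_assoc] at hu hv
      exact hσe.trans hu (hσe.trans h1 (hσe.symm hv))
    · refine ⟨⟨fun x c => ⟨Iff.rfl, fun _ => hσe.refl _⟩, fun h c => ⟨(h c).1.symm,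
        fun hc => hσe.symm ((h c).2 ((h c).1.2 hc))⟩, fun h h' c => ⟨(h c).1.trans (h' c).1,
        fun hc => hσe.trans ((h c).2 hc) ((h' c).2 ((h c).1.1 hc))⟩⟩, ?_⟩
      intro x y c h d
      simpa only [mul_assoc] using h (c * d)
    · intro p hp c
      refine ⟨hst p hp c, fun hc => ?_⟩
      obtain ⟨t', rfl⟩ := ht0' _ _ hc
      have := hσm _ _ t' (hK _ (Set.mem_insert_of_mem _ ⟨p, hp, rfl⟩))
      simpa only [mul_assoc] using this

theorem stmt5 {G : Type*} [Group G] (θ : G →* G)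
    {S : Type*} [Monoid S] (f : ℤ × G × ℤ → S)
    (hinj : Function.Injective f)
    (hne1 : ∀ p : ℤ × G × ℤ, f p ≠ 1)
    (hcover : ∀ s : S, s = 1 ∨ ∃ p : ℤ × G × ℤ, f p = s)
    (hmul : ∀ (a : ℤ) (g : G) (b : ℤ) (c : ℤ) (h : G) (d : ℤ),
      f (a, g, b) * f (c, h, d) =
        f (a - b + max b c,
           (⇑θ)^[(max b c - b).toNat] g * (⇑θ)^[(max b c - c).toNat] h,
           d - c + max b c)) :
    RightCoherent S ∧ ¬ WeaklyRightNoetherian S := by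
  classical
  let I : ℤ → Set S := fun n => {x | ∃ c h d, x = f (c, h, d) ∧ n ≤ c}
  let e : ℤ → S := fun n => f (n, 1, n)
  have hIf : ∀ n c h d, f (c, h, d) ∈ I n ↔ n ≤ c := by
    intro n c h d
    constructor
    · rintro ⟨c', h', d', hx, hn⟩
      have := hinj hx
      simp only [Prod.mk.injEq] at this
      omega
    · intro hn
      exact ⟨c, h, d, rfl, hn⟩
  have h1I : ∀ n, (1 : S) ∉ I n := by
    rintro n ⟨c, h, d, hx, _⟩
    exact hne1 _ hx.symm
  have hImul : ∀ n, ∀ x ∈ I n, ∀ s, x * s ∈ I n := by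
    rintro n _ ⟨c, h, d, rfl, hn⟩ s
    rcases hcover s with rfl | ⟨⟨a, g, b⟩, rfl⟩
    · rw [mul_one]; exact (hIf _ _ _ _).2 hn
    · rw [hmul, hIf]
      have := le_max_left d a
      omega
  have hIgen : ∀ a g b, ∀ x ∈ I a, ∃ t, x = f (a, g, b) * t := by
    rintro a g b _ ⟨c, h, d, rfl, hn⟩
    refine ⟨f (c - a + b, ((⇑θ)^[(c - a).toNat] g)⁻¹ * h, d), ?_⟩
    rw [hmul, max_eq_right (by omega)]
    have h1 : c - a + b - b = c - a := by ring
    have h2 : a - b + (c - a + b) = c := by ring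
    have h3 : d - (c - a + b) + (c - a + b) = d := by ring
    rw [h1, h2, h3]
    simp
  have heI : ∀ n, e n ∈ I n := fun n => (hIf _ _ _ _).2 le_rfl
  have hex : ∀ n, ∀ x ∈ I n, e n * x = x := by
    rintro n _ ⟨c, h, d, rfl, hn⟩
    simp only [e]
    rw [hmul, max_eq_right hn]
    have h1 : n - n + c = c := by ring
    have h3 : d - c + c = d := by ring
    rw [h1, h3]
    simp [iterate_map_one]
  have hIt0 : ∀ n (p : S), ∃ t0, p * t0 ∈ I n ∧ ∀ t, p * t ∈ I n → ∃ t', t = t0 * t' := by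
    intro n p
    rcases hcover p with rfl | ⟨⟨a, g, b⟩, rfl⟩
    · refine ⟨e n, by simpa using heI n, fun t ht => ⟨t, ?_⟩⟩
      rw [one_mul] at ht
      exact (hex n t ht).symm
    · by_cases ha : n ≤ a
      · exact ⟨1, by simpa using (hIf _ _ _ _).2 ha, fun t _ => ⟨t, by simp⟩⟩
      · refine ⟨e (n - a + b), ?_, fun t ht => ?_⟩
        · simp only [e]
          rw [hmul, hIf]
          have := le_max_right b (n - a + b)
          omega
        · rcases hcover t with rfl | ⟨⟨c, h, d⟩, rfl⟩
          · rw [mul_one, hIf] at ht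
            exact absurd ht ha
          · rw [hmul, hIf] at ht
            refine ⟨f (c, h, d), (hex _ _ ((hIf _ _ _ _).2 ?_)).symm⟩
            rcases max_cases b c with h | h <;> omega
  refine ⟨?_, ?_⟩
  · rintro r ⟨H, hH, hr⟩ a b
    have hr0 := hr
    obtain ⟨⟨heq, hmulr⟩, hHr, hmin⟩ := hr
    constructor
    · have hchain : (∃ t, a = b * t) ∨ (∃ t, b = a * t) := by
        rcases hcover a with rfl | ⟨⟨a1, a2, a3⟩, rfl⟩
        · exact Or.inr ⟨b, by simp⟩
        rcases hcover b with rfl | ⟨⟨b1, b2, b3⟩, rfl⟩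
        · exact Or.inl ⟨f (a1, a2, a3), by simp⟩
        rcases le_total a1 b1 with h | h
        · exact Or.inr (hIgen _ _ _ _ ((hIf _ _ _ _).2 h))
        · exact Or.inl (hIgen _ _ _ _ ((hIf _ _ _ _).2 h))
      rcases hchain with ⟨t, ht⟩ | ⟨t, ht⟩
      · refine ⟨{a}, ?_⟩
        ext x
        simp only [Set.mem_setOf_eq, Finset.mem_singleton, Set.iUnion_iUnion_eq_left]
        refine ⟨fun h => h.1, fun h => ⟨h, ?_⟩⟩
        obtain ⟨s, hs⟩ := h
        exact ⟨t * s, by rwa [← mul_assoc, ← ht]⟩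
      · refine ⟨{b}, ?_⟩
        ext x
        simp only [Set.mem_setOf_eq, Finset.mem_singleton, Set.iUnion_iUnion_eq_left]
        refine ⟨fun h => h.2, fun h => ⟨?_, h⟩⟩
        obtain ⟨s, hs⟩ := h
        exact ⟨t * s, by rwa [← mul_assoc, ← ht]⟩
    · by_cases h1 : ∃ s, r 1 (a * s)
      · obtain ⟨s, hs⟩ := h1
        exact ann_fg r H hH hr0 a s 1 Set.univ (by simp) (by simp) (by simp) hs (by simp)
          (fun p => ⟨1, by simp, fun t _ => ⟨t, by simp⟩⟩)
      let D : Set S := {x | ∃ s, r x (a * s)}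
      have hDmul : ∀ x ∈ D, ∀ c, x * c ∈ D := by
        rintro x ⟨s, hs⟩ c
        exact ⟨s * c, by rw [← mul_assoc]; exact hmulr _ _ _ hs⟩
      have hDsat : ∀ x y, r x y → (x ∈ D ↔ y ∈ D) := fun x y h =>
        ⟨fun ⟨s, hs⟩ => ⟨s, heq.trans (heq.symm h) hs⟩, fun ⟨s, hs⟩ => ⟨s, heq.trans h hs⟩⟩
      have haD : a ∈ D := ⟨1, by rw [mul_one]; exact heq.refl _⟩
      have h1D : (1 : S) ∉ D := h1
      have hID : ∀ c g d, f (c, g, d) ∈ D → ∀ n, c ≤ n → I n ⊆ D := by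
        rintro c g d hD n hn _ ⟨c', h', d', rfl, hn'⟩
        obtain ⟨t, ht⟩ := hIgen c g d (f (c', h', d')) ((hIf _ _ _ _).2 (by omega))
        rw [ht]
        exact hDmul _ hD _
      by_cases hall : ∀ n, e n ∈ D
      · have hfD : ∀ p, f p ∈ D := fun ⟨c, h, d⟩ =>
          hID _ _ _ (hall c) c le_rfl ((hIf _ _ _ _).2 le_rfl)
        have hlow : ∀ T : Set S, T.Finite → ∃ N : ℤ, ∀ x ∈ T, x ≠ 1 → x ∈ I N := by
          intro T hT
          induction T, hT using Set.Finite.induction_on with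
          | empty => exact ⟨0, by simp⟩
          | @insert x T _ _ ih =>
            obtain ⟨N, hN⟩ := ih
            rcases hcover x with rfl | ⟨⟨c, h, d⟩, rfl⟩
            · refine ⟨N, fun y hy hy1 => ?_⟩
              rcases hy with rfl | hy
              · exact absurd rfl hy1
              · exact hN y hy hy1
            · refine ⟨min N c, fun y hy hy1 => ?_⟩
              rcases hy with rfl | hy
              · exact (hIf _ _ _ _).2 (min_le_right _ _)
              · obtain ⟨c', h', d', rfl, hc'⟩ := hN y hy hy1
                exact (hIf _ _ _ _).2 ((min_le_left _ _).trans hc')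
        obtain ⟨N, hN⟩ := hlow (insert a (Prod.fst '' H ∪ Prod.snd '' H))
          (((hH.image _).union (hH.image _)).insert _)
        obtain ⟨s, hs⟩ := hall N
        have ha1 : a ≠ 1 := by rintro rfl; exact h1D haD
        refine ann_fg r H hH hr0 a s (e N) (I N) (hImul N) (hN a (Set.mem_insert _ _) ha1)
          (hex N) hs ?_ (hIt0 N)
        intro p hp t
        have hp1 : p.1 ≠ 1 → p.1 ∈ I N := hN _ (Or.inr (Or.inl ⟨p, hp, rfl⟩))
        have hp2 : p.2 ≠ 1 → p.2 ∈ I N := hN _ (Or.inr (Or.inr ⟨p, hp, rfl⟩))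
        have hD := hDsat _ _ (hHr p hp)
        have hne : ∀ x : S, x ∈ D ↔ x ≠ 1 := by
          intro x
          refine ⟨by rintro h rfl; exact h1D h, fun h => ?_⟩
          rcases hcover x with rfl | ⟨q, rfl⟩
          · exact absurd rfl h
          · exact hfD q
        rw [hne, hne] at hD
        by_cases hx : p.1 = 1
        · have hy : p.2 = 1 := by by_contra hy; exact hD.2 hy hx
          rw [hx, hy]
        · exact iff_of_true (hImul _ _ (hp1 hx) _) (hImul _ _ (hp2 (hD.1 hx)) _)
      · push Not at hall
        obtain ⟨m, hm⟩ := hall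
        have hbd : ∀ z : ℤ, e z ∈ D → m ≤ z := by
          intro z hz
          by_contra hlt
          exact hm (hID _ _ _ hz m (by omega) (heI m))
        have hsome : ∃ z : ℤ, e z ∈ D := by
          rcases hcover a with h | ⟨⟨c, h, d⟩, h⟩
          · rw [h] at haD; exact absurd haD h1D
          · rw [← h] at haD
            exact ⟨c, hID _ _ _ haD c le_rfl (heI c)⟩
        obtain ⟨n, hn, hleast⟩ := Int.exists_least_of_bdd ⟨m, hbd⟩ hsome
        have hDI : ∀ x, x ∈ D ↔ x ∈ I n := by
          intro x
          refine ⟨fun hx => ?_, fun hx => hID _ _ _ hn n le_rfl hx⟩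
          rcases hcover x with rfl | ⟨⟨c, h, d⟩, rfl⟩
          · exact absurd hx h1D
          · exact (hIf _ _ _ _).2 (hleast c (hID _ _ _ hx c le_rfl (heI c)))
        obtain ⟨s, hs⟩ := hn
        refine ann_fg r H hH hr0 a s (e n) (I n) (hImul n) ((hDI a).1 haD) (hex n) hs ?_ (hIt0 n)
        intro p hp t
        rw [← hDI, ← hDI]
        exact hDsat _ _ (hmulr _ _ _ (hHr p hp))
  · intro hW
    obtain ⟨A, hA⟩ := hW (Set.range f) (by
      rintro _ ⟨⟨a, g, b⟩, rfl⟩ s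
      rcases hcover s with rfl | ⟨⟨c, h, d⟩, rfl⟩
      · exact ⟨_, (mul_one _).symm⟩
      · exact ⟨_, (hmul _ _ _ _ _ _).symm⟩)
    have hAI : ∀ B : Finset S, (∀ x ∈ B, x ∈ Set.range f) → ∃ N : ℤ, ∀ x ∈ B, x ∈ I N := by
      intro B
      induction B using Finset.induction_on with
      | empty => exact fun _ => ⟨0, by simp⟩
      | insert x B _ ih =>
        intro hB
        obtain ⟨N, hN⟩ := ih fun x hx => hB x (Finset.mem_insert_of_mem hx)
        obtain ⟨⟨c, h, d⟩, rfl⟩ := hB x (Finset.mem_insert_self _ _)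
        refine ⟨min N c, fun y hy => ?_⟩
        rcases Finset.mem_insert.1 hy with rfl | hy
        · exact (hIf _ _ _ _).2 (min_le_right _ _)
        · obtain ⟨c', h', d', rfl, hc'⟩ := hN y hy
          exact (hIf _ _ _ _).2 ((min_le_left _ _).trans hc')
    obtain ⟨N, hN⟩ := hAI A (by
      intro x hx
      rw [hA]
      simp only [Set.mem_iUnion]
      exact ⟨x, hx, 1, by simp⟩)
    have hmem : e (N - 1) ∈ Set.range f := ⟨_, rfl⟩
    rw [hA] at hmem
    simp only [Set.mem_iUnion] at hmem
    obtain ⟨x, hx, s, hs⟩ := hmem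
    have h2 := hImul N x (hN x hx) s
    rw [← hs, hIf] at h2
    omega
end

section
/- Let S be a right coherent monoid and let I be a two-sided ideal of S (i.e. SI ⊆ I and IS ⊆ I) which contains an element e with ea = ae = a for all a ∈ I. Then I, regarded as a monoid with identity e under the multiplication of S, is right coherent. -/
theorem exists_rcong_gen {M : Type*} [Monoid M] (H : Set (M × M)) :
    ∃ r : M → M → Prop, RCongGenBy H r := by
  refine ⟨fun x y => ∀ r' : M → M → Prop, IsRightCongruence r' →
    (∀ p ∈ H, r' p.1 p.2) → r' x y, ⟨⟨?_, ?_, ?_⟩, ?_⟩, ?_, ?_⟩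
  · intro x r' h _
    exact h.1.refl x
  · intro x y hxy r' h hH
    exact h.1.symm (hxy r' h hH)
  · intro x y z hxy hyz r' h hH
    exact h.1.trans (hxy r' h hH) (hyz r' h hH)
  · intro a b c hab r' h hH
    exact h.2 a b c (hab r' h hH)
  · intro p hp r' _ hH
    exact hH p hp
  · intro r' h hH x y hxy
    exact hxy r' h hH

theorem IsRightCongruence.pullback {M N : Type*} [Monoid M] [Monoid N] (f : M → N)
    (hf : ∀ x y, f (x * y) = f x * f y) {r : N → N → Prop} (hr : IsRightCongruence r) :
    IsRightCongruence (fun x y => r (f x) (f y)) := by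
  refine ⟨⟨fun x => hr.1.refl _, fun h => hr.1.symm h, fun h k => hr.1.trans h k⟩, ?_⟩
  intro a b c h
  simp only [hf]
  exact hr.2 _ _ _ h

theorem RightCoherent.retract {S N : Type*} [Monoid S] [Monoid N] (hS : RightCoherent S)
    (φ : N → S) (ψ : S → N) (hφ : ∀ x y, φ (x * y) = φ x * φ y)
    (hψ : ∀ x y, ψ (x * y) = ψ x * ψ y) (hψφ : ∀ x, ψ (φ x) = x) : RightCoherent N := by
  classical
  rintro r ⟨H, hHfin, hr, hHr, hmin⟩ a b
  obtain ⟨q, hq, hHq, hqmin⟩ := exists_rcong_gen ((fun p : N × N => (φ p.1, φ p.2)) '' H)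
  have down : ∀ s t, q s t → r (ψ s) (ψ t) := by
    refine hqmin _ (hr.pullback ψ hψ) ?_
    rintro _ ⟨p, hp, rfl⟩
    simpa [hψφ] using hHr p hp
  have up : ∀ x y, r x y → q (φ x) (φ y) := by
    refine hmin _ (hq.pullback φ hφ) ?_
    intro p hp
    exact hHq _ ⟨p, hp, rfl⟩
  obtain ⟨⟨C, hC⟩, K, hKfin, hK, hKq, hKmin⟩ :=
    hS q ⟨_, hHfin.image _, hq, hHq, hqmin⟩ (φ a) (φ b)
  constructor
  · refine ⟨C.image ψ, ?_⟩
    ext x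
    simp only [Set.mem_ofPred_eq, Set.mem_iUnion, Finset.mem_image, exists_prop]
    constructor
    · rintro ⟨⟨s, hs⟩, t, ht⟩
      have hx : φ x ∈ ⋃ c ∈ C, {x : S | ∃ s : S, q x (c * s)} := by
        rw [← hC]
        exact ⟨⟨φ s, by rw [← hφ]; exact up _ _ hs⟩, φ t, by rw [← hφ]; exact up _ _ ht⟩
      simp only [Set.mem_ofPred_eq, Set.mem_iUnion, exists_prop] at hx
      obtain ⟨c, hc, w, hw⟩ := hx
      refine ⟨ψ c, ⟨c, hc, rfl⟩, ψ w, ?_⟩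
      have := down _ _ hw
      rwa [hψφ, hψ] at this
    · rintro ⟨_, ⟨c, hc, rfl⟩, s, hs⟩
      have hx : c ∈ ⋃ c ∈ C, {x : S | ∃ s : S, q x (c * s)} := by
        simp only [Set.mem_ofPred_eq, Set.mem_iUnion, exists_prop]
        exact ⟨c, hc, 1, by rw [mul_one]; exact hq.1.refl c⟩
      rw [← hC] at hx
      obtain ⟨⟨u, hu⟩, v, hv⟩ := hx
      have hu := hr.2 _ _ s (down _ _ hu)
      have hv := hr.2 _ _ s (down _ _ hv)
      rw [hψ, hψφ, mul_assoc] at hu hv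
      exact ⟨⟨_, hr.1.trans hs hu⟩, _, hr.1.trans hs hv⟩
  · refine ⟨(fun p : S × S => (ψ p.1, ψ p.2)) '' K, hKfin.image _, ?_, ?_, ?_⟩
    · refine ⟨⟨fun x => hr.1.refl _, fun h => hr.1.symm h, fun h k => hr.1.trans h k⟩, ?_⟩
      intro x y c h
      simp only [← mul_assoc]
      exact hr.2 _ _ _ h
    · rintro _ ⟨p, hp, rfl⟩
      have := down _ _ (hKq p hp)
      simpa only [hψ, hψφ] using this
    · intro r' hr' hKr' x y hxy
      have := hKmin _ (hr'.pullback ψ hψ) (fun p hp => hKr' _ ⟨p, hp, rfl⟩) (φ x) (φ y)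
        (by beta_reduce; rw [← hφ, ← hφ]; exact up _ _ hxy)
      simpa only [hψφ] using this

theorem stmt6 {S : Type*} [Monoid S] (hS : RightCoherent S)
    (I : Set S)
    (hleft : ∀ s : S, ∀ a ∈ I, s * a ∈ I)
    (hright : ∀ a ∈ I, ∀ s : S, a * s ∈ I)
    (e : S) (he : e ∈ I)
    (hel : ∀ a ∈ I, e * a = a) (her : ∀ a ∈ I, a * e = a)
    (N : Type*) [Monoid N] (φ : N → S)
    (hinj : Function.Injective φ) (hrange : Set.range φ = I)
    (hmulφ : ∀ x y : N, φ (x * y) = φ x * φ y) (h1φ : φ 1 = e) :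
    RightCoherent N := by
  have hex : ∀ s : S, ∃ n : N, φ n = e * s := by
    intro s
    have : e * s ∈ Set.range φ := by
      rw [hrange]
      exact hright e he s
    exact this
  choose ψ hψ using hex
  refine hS.retract φ ψ hmulφ ?_ ?_
  · intro x y
    apply hinj
    rw [hmulφ, hψ, hψ, hψ, ← mul_assoc (e * x) e y, her _ (hright e he x), mul_assoc]
  · intro x
    apply hinj
    rw [hψ]
    exact hel _ (hrange ▸ Set.mem_range_self x)
end

section
/- Let S be a monoid and let T be a subsemigroup of S possessing an identity element e (so T is a monoid under the multiplication of S). If T is weakly left unitary, then T has the strong right congruence extension property (SRCEP): for every right congruence ρ on T, ρ = ρ^S ∩ (T × T) and T is a union of ρ^S-classes, where ρ^S is the right congruence on S generated by ρ. -/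
theorem stmt8 {S : Type*} [Monoid S] (T : Set S)
    (hT : ∀ a ∈ T, ∀ b ∈ T, a * b ∈ T)
    (e : S) (he : e ∈ T)
    (hel : ∀ a ∈ T, e * a = a) (her : ∀ a ∈ T, a * e = a)
    (hwlu : ∀ a ∈ T, ∀ b : S, a * b ∈ T → e * b ∈ T)
    (r : S → S → Prop)
    (hsupp : ∀ x y : S, r x y → x ∈ T ∧ y ∈ T)
    (hrefl : ∀ x ∈ T, r x x)
    (hsymm : ∀ x y : S, r x y → r y x)
    (htrans : ∀ x y w : S, r x y → r y w → r x w)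
    (hcomp : ∀ x y : S, r x y → ∀ c ∈ T, r (x * c) (y * c))
    (rS : S → S → Prop) (hrS : RCongGenBy {p : S × S | r p.1 p.2} rS) :
    (∀ x y : S, r x y ↔ (rS x y ∧ x ∈ T ∧ y ∈ T)) ∧
    (∀ t ∈ T, ∀ s : S, rS t s → s ∈ T) := by
  obtain ⟨_, hH, hmin⟩ := hrS
  have aux : ∀ x y c : S, r x y → x * c ∈ T → r (x * c) (y * c) := by
    intro x y c hxy hx
    obtain ⟨hxT, hyT⟩ := hsupp x y hxy
    have h := hcomp x y hxy (e * c) (hwlu x hxT c hx)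
    rwa [← mul_assoc, ← mul_assoc, her x hxT, her y hyT] at h
  have key : ∀ x y : S, rS x y → ∀ c : S, (x * c ∈ T ∨ y * c ∈ T) → r (x * c) (y * c) := by
    apply hmin (fun x y => ∀ c : S, (x * c ∈ T ∨ y * c ∈ T) → r (x * c) (y * c))
    · refine ⟨⟨?_, ?_, ?_⟩, ?_⟩
      · intro x c h
        exact hrefl _ (h.elim id id)
      · intro x y h c hc
        exact hsymm _ _ (h c hc.symm)
      · intro x y z h1 h2 c hc
        rcases hc with hc | hc
        · have h := h1 c (Or.inl hc)
          exact htrans _ _ _ h (h2 c (Or.inl (hsupp _ _ h).2))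
        · have h := h2 c (Or.inr hc)
          exact htrans _ _ _ (h1 c (Or.inr (hsupp _ _ h).1)) h
      · intro a b c h d hd
        rw [mul_assoc, mul_assoc] at *
        exact h (c * d) hd
    · intro p hp c hc
      rcases hc with hc | hc
      · exact aux _ _ c hp hc
      · exact hsymm _ _ (aux _ _ c (hsymm _ _ hp) hc)
  have key1 : ∀ x y : S, rS x y → x ∈ T → r x y := by
    intro x y h hx
    have := key x y h 1 (Or.inl (by rwa [mul_one]))
    rwa [mul_one, mul_one] at this
  refine ⟨fun x y => ⟨fun h => ⟨hH (x, y) h, hsupp x y h⟩, fun h => key1 x y h.1 h.2.1⟩, ?_⟩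
  intro t ht s h
  exact (hsupp _ _ (key1 t s h ht)).2
end

section
/- Let S be a monoid and let J be a monoid 𝓙-class of S, with identity element e. Then J is weakly left unitary and weakly right unitary: for a, b with a ∈ J, if ab ∈ J then eb ∈ J, and if ba ∈ J then be ∈ J. -/
theorem stmt9 {S : Type*} [Monoid S] (J : Set S)
    (hclosed : ∀ a ∈ J, ∀ b ∈ J, a * b ∈ J)
    (e : S) (he : e ∈ J)
    (hel : ∀ a ∈ J, e * a = a) (her : ∀ a ∈ J, a * e = a)
    (hJclass : ∀ a ∈ J, ∀ b : S,
      (b ∈ J ↔ ((∃ s t : S, b = s * a * t) ∧ (∃ s t : S, a = s * b * t)))) :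
    ∀ a ∈ J, ∀ b : S, (a * b ∈ J → e * b ∈ J) ∧ (b * a ∈ J → b * e ∈ J) := by
  intro a ha b
  refine ⟨fun h => ?_, fun h => ?_⟩
  · obtain ⟨s, t, hst⟩ := ((hJclass e he _).1 h).2
    refine (hJclass e he _).2 ⟨⟨1, b, by rw [one_mul]⟩, s * a, t, ?_⟩
    have h1 : s * a * (e * b) * t = s * ((a * e) * b) * t := by simp only [mul_assoc]
    rw [h1, her a ha]
    exact hst
  · obtain ⟨s, t, hst⟩ := ((hJclass e he _).1 h).2
    refine (hJclass e he _).2 ⟨⟨b, 1, by rw [mul_one]⟩, s, a * t, ?_⟩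
    have h1 : s * (b * e) * (a * t) = s * (b * (e * a)) * t := by simp only [mul_assoc]
    rw [h1, hel a ha]
    exact hst
end

section
/- Let M be a monoid, I a non-empty set, and S = B(M; I)¹ the Brandt monoid over M. If S is right coherent, then M is right coherent. -/
def liftRel {Mo I S : Type*} (f : I × Mo × I → S) (i : I) (r : Mo → Mo → Prop) (x y : S) : Prop :=
  x = y ∨ ∃ m n j, x = f (i, m, j) ∧ y = f (i, n, j) ∧ r m n

theorem liftRel_some {Mo I S : Type*} (f : I × Mo × I → S) (hinj : Function.Injective f) (i : I)
    (r : Mo → Mo → Prop) (hr : Equivalence r) (m n : Mo) (j k : I) :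
    liftRel f i r (f (i, m, j)) (f (i, n, k)) ↔ j = k ∧ r m n := by
  constructor
  · rintro (h | ⟨m', n', j', h1, h2, h3⟩)
    · have h' := hinj h
      simp only [Prod.mk.injEq, true_and] at h'
      exact ⟨h'.2, h'.1 ▸ hr.refl _⟩
    · have h1' := hinj h1
      have h2' := hinj h2
      simp only [Prod.mk.injEq, true_and] at h1' h2'
      obtain ⟨rfl, rfl⟩ := h1'
      obtain ⟨rfl, rfl⟩ := h2'
      exact ⟨rfl, h3⟩
  · rintro ⟨rfl, h⟩
    exact Or.inr ⟨m, n, j, rfl, rfl, h⟩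

theorem liftRel_none {Mo I S : Type*} (f : I × Mo × I → S) (i : I)
    (r : Mo → Mo → Prop) (z x : S) (hfz : ∀ p, f p ≠ z) (h : liftRel f i r z x) : x = z := by
  rcases h with h | ⟨m, n, j, h, _⟩
  · exact h.symm
  · exact absurd h.symm (hfz _)

theorem liftRel_equiv {Mo I S : Type*} (f : I × Mo × I → S) (hinj : Function.Injective f) (i : I)
    (r : Mo → Mo → Prop) (hr : Equivalence r) : Equivalence (liftRel f i r) := by
  refine ⟨fun x => Or.inl rfl, ?_, ?_⟩
  · rintro x y (rfl | ⟨m, n, j, rfl, rfl, h⟩)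
    · exact Or.inl rfl
    · exact Or.inr ⟨n, m, j, rfl, rfl, hr.symm h⟩
  · rintro x y w (rfl | ⟨m, n, j, rfl, rfl, h⟩) hw
    · exact hw
    · rcases hw with rfl | ⟨m', n', j', h1, rfl, h'⟩
      · exact Or.inr ⟨m, n, j, rfl, rfl, h⟩
      · have h1' := hinj h1
        simp only [Prod.mk.injEq, true_and] at h1'
        obtain ⟨rfl, rfl⟩ := h1'
        exact Or.inr ⟨m, n', j, rfl, rfl, hr.trans h h'⟩

theorem stmt12
    {Mo : Type*} [Monoid Mo] {I : Type*} [Nonempty I]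
    {S : Type*} [Monoid S] (f : I × Mo × I → S) (z : S)
    (hinj : Function.Injective f)
    (hfz : ∀ p : I × Mo × I, f p ≠ z) (hf1 : ∀ p : I × Mo × I, f p ≠ 1) (hz1 : z ≠ 1)
    (hcover : ∀ s : S, s = 1 ∨ s = z ∨ ∃ p : I × Mo × I, f p = s)
    (hmul_eq : ∀ (i : I) (a : Mo) (j : I) (b : Mo) (l : I),
      f (i, a, j) * f (j, b, l) = f (i, a * b, l))
    (hmul_ne : ∀ (i : I) (a : Mo) (j k : I) (b : Mo) (l : I), j ≠ k →
      f (i, a, j) * f (k, b, l) = z)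
    (hzmul : ∀ s : S, z * s = z ∧ s * z = z)
    (hcoh : RightCoherent S) :
    RightCoherent Mo := by
  classical
  obtain ⟨i⟩ := ‹Nonempty I›
  have act : ∀ (j : I) (u : S), (∀ m, f (i, m, j) * u = z) ∨
      ∃ n l, ∀ m, f (i, m, j) * u = f (i, m * n, l) := by
    intro j u
    rcases hcover u with rfl | rfl | ⟨⟨k, n, l⟩, rfl⟩
    · exact Or.inr ⟨1, j, fun m => by simp⟩
    · exact Or.inl fun m => (hzmul _).2
    · by_cases h : j = k
      · subst h
        exact Or.inr ⟨n, l, fun m => hmul_eq _ _ _ _ _⟩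
      · exact Or.inl fun m => hmul_ne _ _ _ _ _ _ h
  have liftCong : ∀ r : Mo → Mo → Prop, IsRightCongruence r →
      IsRightCongruence (liftRel f i r) := by
    intro r hr
    refine ⟨liftRel_equiv f hinj i r hr.1, ?_⟩
    rintro x y c (rfl | ⟨m, n, j, rfl, rfl, h⟩)
    · exact Or.inl rfl
    · rcases act j c with hc | ⟨q, l, hc⟩
      · rw [hc, hc]; exact Or.inl rfl
      · rw [hc, hc]; exact Or.inr ⟨_, _, l, rfl, rfl, hr.2 _ _ _ h⟩
  intro r hrfg a b
  obtain ⟨H, hHfin, hr, hHr, hmin⟩ := hrfg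
  have hsome := liftRel_some f hinj i r hr.1
  have hR := liftCong r hr
  have hRfg : FGRightCongruence (liftRel f i r) := by
    refine ⟨Set.image (fun p : Mo × Mo => (f (i, p.1, i), f (i, p.2, i))) H, hHfin.image _, hR, ?_, ?_⟩
    · rintro _ ⟨p, hp, rfl⟩
      exact (hsome _ _ _ _).2 ⟨rfl, hHr p hp⟩
    · intro r' hr' hH x y hxy
      rcases hxy with rfl | ⟨m, n, j, rfl, rfl, h⟩
      · exact hr'.1.refl _
      · have key := hmin (fun m n => r' (f (i, m, i)) (f (i, n, i)))
          ⟨⟨fun _ => hr'.1.refl _, fun h => hr'.1.symm h, fun h h' => hr'.1.trans h h'⟩, by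
            intro a b c hab
            have := hr'.2 _ _ (f (i, c, i)) hab
            rwa [hmul_eq, hmul_eq] at this⟩
          (fun p hp => hH _ ⟨p, hp, rfl⟩) m n h
        have := hr'.2 _ _ (f (i, 1, j)) key
        rwa [hmul_eq, hmul_eq, mul_one, mul_one] at this
  haveI : Nonempty (I × Mo × I) := ⟨(i, 1, i)⟩
  let g : S → Mo := fun s => (Function.invFun f s).2.1
  have hg : ∀ k m j, g (f (k, m, j)) = m := by
    intro k m j
    simp only [g, Function.leftInverse_invFun hinj (k, m, j)]
  obtain ⟨⟨C, hC⟩, hann⟩ := hcoh _ hRfg (f (i, a, i)) (f (i, b, i))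
  refine ⟨?_, ?_⟩
  · refine ⟨(C.filter (fun c => ∃ m j, c = f (i, m, j))).image g, ?_⟩
    have hCm : ∀ c ∈ C, (∃ s, liftRel f i r c (f (i, a, i) * s)) ∧
        ∃ t, liftRel f i r c (f (i, b, i) * t) := by
      intro c hc
      have : c ∈ ⋃ c ∈ C, {x : S | ∃ s : S, liftRel f i r x (c * s)} := by
        simp only [Set.mem_iUnion, Set.mem_setOf_eq]
        exact ⟨c, hc, 1, by rw [mul_one]; exact Or.inl rfl⟩
      rw [← hC] at this
      exact this
    have down : ∀ (a' m : Mo) (j : I), (∃ s, liftRel f i r (f (i, m, j)) (f (i, a', i) * s)) →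
        ∃ s, r m (a' * s) := by
      rintro a' m j ⟨s, hs⟩
      rcases act i s with h | ⟨q, l, h⟩
      · rw [h] at hs
        exact absurd (liftRel_none f i r z _ hfz (hR.1.symm hs)) (hfz _)
      · rw [h] at hs
        exact ⟨q, ((hsome _ _ _ _).1 hs).2⟩
    have up : ∀ x a' : Mo, (∃ s, r x (a' * s)) →
        ∃ s, liftRel f i r (f (i, x, i)) (f (i, a', i) * s) := by
      rintro x a' ⟨s, hs⟩
      exact ⟨f (i, s, i), by rw [hmul_eq]; exact (hsome _ _ _ _).2 ⟨rfl, hs⟩⟩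
    ext x
    simp only [Set.mem_iUnion, Set.mem_setOf_eq, Finset.mem_image, Finset.mem_filter]
    constructor
    · rintro ⟨h1, h2⟩
      have hx : f (i, x, i) ∈ ⋃ c ∈ C, {x : S | ∃ s : S, liftRel f i r x (c * s)} := by
        rw [← hC]
        exact ⟨up _ _ h1, up _ _ h2⟩
      simp only [Set.mem_iUnion, Set.mem_setOf_eq] at hx
      obtain ⟨c, hc, s, hs⟩ := hx
      obtain ⟨⟨t, ht⟩, -⟩ := hCm c hc
      have hcf : ∃ m j, c = f (i, m, j) := by
        have hcz : c ≠ z := by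
          rintro rfl
          rw [(hzmul s).1] at hs
          exact hfz _ (liftRel_none f i r _ _ hfz (hR.1.symm hs))
        rcases ht with ht | ⟨m, n, j, h, _⟩
        · rcases act i t with h | ⟨q, l, h⟩
          · exact absurd (ht.trans (h a)) hcz
          · exact ⟨_, _, ht.trans (h a)⟩
        · exact ⟨m, j, h⟩
      refine ⟨g c, ⟨c, ⟨hc, hcf⟩, rfl⟩, ?_⟩
      obtain ⟨m, j, rfl⟩ := hcf
      rw [hg]
      rcases act j s with h | ⟨q, l, h⟩
      · rw [h] at hs
        exact absurd (liftRel_none f i r z _ hfz (hR.1.symm hs)) (hfz _)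
      · rw [h] at hs
        exact ⟨q, ((hsome _ _ _ _).1 hs).2⟩
    · rintro ⟨_, ⟨c, ⟨hc, m, j, rfl⟩, rfl⟩, n, hn⟩
      rw [hg] at hn
      obtain ⟨h1, h2⟩ := hCm _ hc
      obtain ⟨s, hs⟩ := down _ _ _ h1
      obtain ⟨t, ht⟩ := down _ _ _ h2
      refine ⟨⟨s * n, ?_⟩, ⟨t * n, ?_⟩⟩
      · rw [← mul_assoc]; exact hr.1.trans hn (hr.2 _ _ _ hs)
      · rw [← mul_assoc]; exact hr.1.trans hn (hr.2 _ _ _ ht)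
  · obtain ⟨H', hH'fin, -, hH'r, hmin'⟩ := hann
    refine ⟨{p | ∃ q ∈ H', ∃ j, f (i, 1, i) * q.1 = f (i, p.1, j) ∧
      f (i, 1, i) * q.2 = f (i, p.2, j)}, ?_, ?_, ?_, ?_⟩
    · refine (hH'fin.image (fun q => (g (f (i, 1, i) * q.1), g (f (i, 1, i) * q.2)))).subset ?_
      rintro ⟨m, n⟩ ⟨q, hq, j, h1, h2⟩
      refine ⟨q, hq, ?_⟩
      simp only [h1, h2, hg]
    · refine ⟨⟨fun _ => hr.1.refl _, fun h => hr.1.symm h, fun h h' => hr.1.trans h h'⟩, ?_⟩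
      intro u v c h
      have := hr.2 _ _ c h
      simpa only [mul_assoc] using this
    · rintro ⟨m, n⟩ ⟨⟨u, v⟩, hq, j, h1, h2⟩
      have h := hH'r _ hq
      have e : f (i, a, i) = f (i, a, i) * f (i, 1, i) := by rw [hmul_eq, mul_one]
      simp only at h h1 h2 ⊢
      rw [e, mul_assoc, mul_assoc, h1, h2, hmul_eq, hmul_eq] at h
      exact ((hsome _ _ _ _).1 h).2
    · intro r' hr' hK m n hmn
      have hR' := liftCong r' hr'
      have key := hmin' (fun u v => liftRel f i r' (f (i, 1, i) * u) (f (i, 1, i) * v))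
        ⟨⟨fun _ => hR'.1.refl _, fun h => hR'.1.symm h, fun h h' => hR'.1.trans h h'⟩, by
          intro u v c h
          have := hR'.2 _ _ c h
          simpa only [mul_assoc] using this⟩ ?_ (f (i, m, i)) (f (i, n, i)) ?_
      · simp only [hmul_eq, one_mul] at key
        exact ((liftRel_some f hinj i r' hr'.1 _ _ _ _).1 key).2
      · rintro ⟨u, v⟩ hq
        have h := hH'r _ hq
        simp only at h ⊢
        rcases act i u with hu | ⟨m', j, hu⟩ <;> rcases act i v with hv | ⟨n', l, hv⟩
        · rw [hu, hv]; exact Or.inl rfl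
        · rw [hu, hv] at h
          exact absurd (liftRel_none f i r z _ hfz h) (hfz _)
        · rw [hu, hv] at h
          exact absurd (liftRel_none f i r z _ hfz (hR.1.symm h)) (hfz _)
        · rw [hu, hv] at h
          obtain ⟨rfl, h⟩ := (hsome _ _ _ _).1 h
          rw [hu, hv]
          refine Or.inr ⟨1 * m', 1 * n', j, rfl, rfl, hK (1 * m', 1 * n') ?_⟩
          exact ⟨(u, v), hq, j, hu 1, hv 1⟩
      · simp only [hmul_eq]
        exact (hsome _ _ _ _).2 ⟨rfl, hmn⟩
end

section
/- Let M be a monoid, θ : M → M an endomorphism, and S = BR(M, θ) the Bruck–Reilly extension of M. If S is right coherent, then M is right coherent. -/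
def genRC {M : Type*} [Monoid M] (H : Set (M × M)) (x y : M) : Prop :=
  ∀ r : M → M → Prop, IsRightCongruence r → (∀ p ∈ H, r p.1 p.2) → r x y

theorem genRC_spec {M : Type*} [Monoid M] (H : Set (M × M)) : RCongGenBy H (genRC H) := by
  refine ⟨⟨⟨?_, ?_, ?_⟩, ?_⟩, ?_, ?_⟩
  · intro x r hr _
    exact hr.1.refl x
  · intro x y h r hr hH
    exact hr.1.symm (h r hr hH)
  · intro x y z h h' r hr hH
    exact hr.1.trans (h r hr hH) (h' r hr hH)
  · intro a b c h r hr hH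
    exact hr.2 _ _ _ (h r hr hH)
  · intro p hp r _ hH
    exact hH p hp
  · intro r hr hH x y h
    exact h r hr hH

def liftRC {Mo S : Type*} (f : ℕ × Mo × ℕ → S) (τ : Mo → Mo → Prop) (x y : S) : Prop :=
  ∃ (c : ℕ) (g g' : Mo) (d : ℕ), x = f (c, g, d) ∧ y = f (c, g', d) ∧ (c = 0 → τ g g')

theorem liftRC_spec {Mo : Type*} [Monoid Mo] (θ : Mo →* Mo)
    {S : Type*} [Monoid S] (f : ℕ × Mo × ℕ → S)
    (hbij : Function.Bijective f)
    (hmul : ∀ (a : ℕ) (g : Mo) (b : ℕ) (c : ℕ) (h : Mo) (d : ℕ),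
      f (a, g, b) * f (c, h, d) =
        f (a + (max b c - b),
           (⇑θ)^[max b c - b] g * (⇑θ)^[max b c - c] h,
           d + (max b c - c)))
    (τ : Mo → Mo → Prop) (hτ : IsRightCongruence τ) : IsRightCongruence (liftRC f τ) := by
  refine ⟨⟨?_, ?_, ?_⟩, ?_⟩
  · intro x
    obtain ⟨⟨c, g, d⟩, rfl⟩ := hbij.2 x
    exact ⟨c, g, g, d, rfl, rfl, fun _ => hτ.1.refl g⟩
  · rintro x y ⟨c, g, g', d, rfl, rfl, h⟩
    exact ⟨c, g', g, d, rfl, rfl, fun h0 => hτ.1.symm (h h0)⟩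
  · rintro x y z ⟨c, g, g', d, rfl, rfl, h⟩ ⟨c', k, k', d', he, rfl, h'⟩
    have he' := hbij.1 he
    simp only [Prod.mk.injEq] at he'
    obtain ⟨rfl, rfl, rfl⟩ := he'
    exact ⟨c, g, k', d, rfl, rfl, fun h0 => hτ.1.trans (h h0) (h' h0)⟩
  · rintro x y z ⟨c, g, g', d, rfl, rfl, h⟩
    obtain ⟨⟨p, q, r⟩, rfl⟩ := hbij.2 z
    refine ⟨_, _, _, _, hmul _ _ _ _ _ _, hmul _ _ _ _ _ _, ?_⟩
    intro h0
    have h1 : max d p - d = 0 := by omega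
    rw [h1]
    exact hτ.2 _ _ _ (h (by omega))

theorem stmt13 {Mo : Type*} [Monoid Mo] (θ : Mo →* Mo)
    {S : Type*} [Monoid S] (f : ℕ × Mo × ℕ → S)
    (hbij : Function.Bijective f)
    (hone : f (0, 1, 0) = 1)
    (hmul : ∀ (a : ℕ) (g : Mo) (b : ℕ) (c : ℕ) (h : Mo) (d : ℕ),
      f (a, g, b) * f (c, h, d) =
        f (a + (max b c - b),
           (⇑θ)^[max b c - b] g * (⇑θ)^[max b c - c] h,
           d + (max b c - c)))
    (hcoh : RightCoherent S) :
    RightCoherent Mo := by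
  have mul0 : ∀ a c h d, f (0, a, 0) * f (c, h, d) = f (c, (⇑θ)^[c] a * h, d) := by
    intro a c h d
    rw [hmul]
    simp
  have mul1 : ∀ g b h, f (0, g, b) * f (b, h, 0) = f (0, g * h, 0) := by
    intro g b h
    rw [hmul]
    simp
  have inv : ∀ g b s c g' d, c = 0 → d = 0 → ∀ p, f (p, g, b) * s = f (c, g', d) →
      p = 0 ∧ ∃ v, s = f (b, v, 0) ∧ g' = g * v := by
    intro g b s c g' d hc hd p h
    obtain ⟨⟨u, v, w⟩, rfl⟩ := hbij.2 s
    rw [hmul] at h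
    have h := hbij.1 h
    simp only [Prod.mk.injEq] at h
    obtain ⟨h1, h2, h3⟩ := h
    have hub : u = b := by omega
    subst hub
    have hw : w = 0 := by omega
    subst hw
    refine ⟨by omega, v, rfl, ?_⟩
    rw [← h2]
    simp
  have liftM : ∀ τ : Mo → Mo → Prop, ∀ m x, liftRC f τ (f (0, m, 0)) x →
      ∃ n, x = f (0, n, 0) ∧ τ m n := by
    rintro τ m x ⟨c, g, g', d, h1, rfl, h⟩
    have h1 := hbij.1 h1
    simp only [Prod.mk.injEq] at h1
    obtain ⟨rfl, rfl, rfl⟩ := h1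
    exact ⟨g', rfl, h rfl⟩
  have pull : ∀ σ : S → S → Prop, IsRightCongruence σ →
      IsRightCongruence (fun m n : Mo => σ (f (0, m, 0)) (f (0, n, 0))) := by
    intro σ hσ
    refine ⟨⟨fun _ => hσ.1.refl _, fun h => hσ.1.symm h, fun h h' => hσ.1.trans h h'⟩, ?_⟩
    intro a b c h
    have := hσ.2 _ _ (f (0, c, 0)) h
    rwa [mul1, mul1] at this
  rintro ρ ⟨H, hHfin, hρ, hHρ, hmin⟩ a b
  set H' : Set (S × S) := (fun p : Mo × Mo => (f (0, p.1, 0), f (0, p.2, 0))) '' H with hH'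
  set σ := genRC H' with hσdef
  have hσ : RCongGenBy H' σ := genRC_spec H'
  have σlift : ∀ x y, σ x y → liftRC f ρ x y := by
    apply hσ.2.2 _ (liftRC_spec θ f hbij hmul ρ hρ)
    rintro _ ⟨p, hp, rfl⟩
    exact ⟨0, _, _, 0, rfl, rfl, fun _ => hHρ p hp⟩
  have ρσ : ∀ m n, ρ m n → σ (f (0, m, 0)) (f (0, n, 0)) := by
    apply hmin _ (pull σ hσ.1)
    intro p hp
    exact hσ.2.1 _ ⟨p, hp, rfl⟩
  have hcos : ∀ m p g d, (∃ s, σ (f (0, m, 0)) (f (p, g, d) * s)) ↔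
      p = 0 ∧ ∃ v, ρ m (g * v) := by
    intro m p g d
    constructor
    · rintro ⟨s, hs⟩
      obtain ⟨n, hn, hmn⟩ := liftM _ _ _ (σlift _ _ hs)
      obtain ⟨hp, v, _, rfl⟩ := inv g d s 0 n 0 rfl rfl p hn
      exact ⟨hp, v, hmn⟩
    · rintro ⟨rfl, v, hv⟩
      refine ⟨f (d, v, 0), ?_⟩
      rw [mul1]
      exact ρσ _ _ hv
  obtain ⟨⟨C, hC⟩, K, hKfin, hK1, hK2, hK3⟩ :=
    hcoh σ ⟨H', hHfin.image _, hσ⟩ (f (0, a, 0)) (f (0, b, 0))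
  constructor
  · classical
    let e := Equiv.ofBijective f hbij
    have he : ∀ c, f (e.symm c) = c := fun c => e.apply_symm_apply c
    refine ⟨(C.filter (fun c => (e.symm c).1 = 0)).image (fun c => (e.symm c).2.1), ?_⟩
    ext m
    have hm := Set.ext_iff.1 hC (f (0, m, 0))
    simp only [Set.mem_ofPred_eq, Set.mem_iUnion, hcos, true_and, exists_prop] at hm
    simp only [Set.mem_ofPred_eq, Set.mem_iUnion, exists_prop]
    rw [hm]
    constructor
    · rintro ⟨c, hc, h⟩
      have h2 : ∃ s, σ (f (0, m, 0)) (f ((e.symm c).1, (e.symm c).2.1, (e.symm c).2.2) * s) := by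
        rw [Prod.mk.eta, he]
        exact h
      rw [hcos] at h2
      exact ⟨_, Finset.mem_image_of_mem _ (Finset.mem_filter.2 ⟨hc, h2.1⟩), h2.2⟩
    · rintro ⟨g, hg, h⟩
      obtain ⟨c, hc, rfl⟩ := Finset.mem_image.1 hg
      obtain ⟨hc, hc0⟩ := Finset.mem_filter.1 hc
      refine ⟨c, hc, ?_⟩
      have h2 := (hcos m (e.symm c).1 (e.symm c).2.1 (e.symm c).2.2).2 ⟨hc0, h⟩
      rw [Prod.mk.eta, he] at h2
      exact h2
  · let e := Equiv.ofBijective f hbij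
    have he' : ∀ t, e.symm (f t) = t := fun t => e.symm_apply_apply t
    have hKform : ∀ x y, σ (f (0, a, 0) * x) (f (0, a, 0) * y) →
        ∃ c g g' d, x = f (c, g, d) ∧ y = f (c, g', d) ∧ (c = 0 → ρ (a * g) (a * g')) := by
      intro x y h
      obtain ⟨⟨c, g, d⟩, rfl⟩ := hbij.2 x
      obtain ⟨⟨c', g', d'⟩, rfl⟩ := hbij.2 y
      rw [mul0, mul0] at h
      obtain ⟨p, k, k', q, h1, h2, h3⟩ := σlift _ _ h
      have h1 := hbij.1 h1
      have h2 := hbij.1 h2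
      simp only [Prod.mk.injEq] at h1 h2
      obtain ⟨rfl, rfl, rfl⟩ := h1
      obtain ⟨rfl, rfl, rfl⟩ := h2
      refine ⟨_, _, _, _, rfl, rfl, ?_⟩
      rintro rfl
      exact h3 rfl
    refine ⟨(fun p : S × S => ((e.symm p.1).2.1, (e.symm p.2).2.1)) ''
      {p ∈ K | (e.symm p.1).1 = 0}, (hKfin.subset (Set.sep_subset _ _)).image _, ?_, ?_, ?_⟩
    · refine ⟨⟨fun _ => hρ.1.refl _, fun h => hρ.1.symm h, fun h h' => hρ.1.trans h h'⟩, ?_⟩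
      intro x y z h
      have := hρ.2 _ _ z h
      rwa [mul_assoc, mul_assoc] at this
    · rintro _ ⟨⟨x, y⟩, ⟨hp, h0⟩, rfl⟩
      obtain ⟨c, g, g', d, rfl, rfl, h⟩ := hKform _ _ (hK2 _ hp)
      simp only [he'] at h0 ⊢
      exact h h0
    · intro τ hτ hKτ u v huv
      have h1 : liftRC f τ (f (0, u, 0)) (f (0, v, 0)) := by
        apply hK3 _ (liftRC_spec θ f hbij hmul τ hτ)
        · rintro ⟨x, y⟩ hp
          obtain ⟨c, g, g', d, rfl, rfl, h⟩ := hKform _ _ (hK2 _ hp)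
          refine ⟨c, g, g', d, rfl, rfl, ?_⟩
          intro h0
          have := hKτ _ ⟨_, ⟨hp, by simpa only [he'] using h0⟩, rfl⟩
          simpa only [he'] using this
        · rw [mul1, mul1]
          exact ρσ _ _ huv
      obtain ⟨n, hn, hun⟩ := liftM _ _ _ h1
      have hn := hbij.1 hn
      simp only [Prod.mk.injEq, true_and, and_true] at hn
      rw [hn]
      exact hun
end
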